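/- Let X, Y ⊂ ℂ² be algebraic plane curves which are bi-Lipschitz equivalent at infinity. Then X and Y have the same degree, where the degree of an algebraic plane curve is the minimal degree of a nonzero polynomial in two variables vanishing identically on it. -/

import Mathlib

open Set Metric

noncomputable section

/-- An algebraic set in ℂᵏ: the common zero set of a finite family of polynomials. -/
def IsAlgebraicSet {k : ℕ} (X : Set (EuclideanSpace ℂ (Fin k))) : Prop :=
  ∃ S : Finset (MvPolynomial (Fin k) ℂ),
    X = {x | ∀ p ∈ S, MvPolynomial.eval (fun i => x i) p = 0}

/-- An irreducible algebraic curve: an infinite algebraic set all of whose proper algebraic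
subsets are finite. -/
def IsIrreducibleAlgebraicCurve {k : ℕ} (X : Set (EuclideanSpace ℂ (Fin k))) : Prop :=
  IsAlgebraicSet X ∧ X.Infinite ∧ ∀ Y, IsAlgebraicSet Y → Y ⊂ X → Y.Finite

/-- An algebraic curve: a finite union of irreducible algebraic curves. -/
def IsAlgebraicCurve {k : ℕ} (X : Set (EuclideanSpace ℂ (Fin k))) : Prop :=
  ∃ F : Finset (Set (EuclideanSpace ℂ (Fin k))),
    (∀ C ∈ F, IsIrreducibleAlgebraicCurve C) ∧ X = ⋃ C ∈ F, C

/-- `f` maps `X` bijectively onto `Y` and is bi-Lipschitz (outer metric). -/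
def IsBiLipschitzOn {E F : Type*} [NormedAddCommGroup E] [NormedAddCommGroup F]
    (f : E → F) (X : Set E) (Y : Set F) : Prop :=
  Set.BijOn f X Y ∧ ∃ C : ℝ, 1 ≤ C ∧ ∀ x ∈ X, ∀ x' ∈ X,
    C⁻¹ * ‖x - x'‖ ≤ ‖f x - f x'‖ ∧ ‖f x - f x'‖ ≤ C * ‖x - x'‖

/-- `X` and `Y` are bi-Lipschitz equivalent (with respect to the outer Euclidean metric). -/
def BiLipschitzEquiv {E F : Type*} [NormedAddCommGroup E] [NormedAddCommGroup F]
    (X : Set E) (Y : Set F) : Prop :=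
  ∃ f : E → F, IsBiLipschitzOn f X Y

/-- `X` and `Y` are bi-Lipschitz equivalent at infinity. -/
def BiLipschitzEquivAtInfinity {E F : Type*} [NormedAddCommGroup E] [NormedAddCommGroup F]
    (X : Set E) (Y : Set F) : Prop :=
  ∃ (K₁ : Set E) (K₂ : Set F), IsCompact K₁ ∧ IsCompact K₂ ∧
    BiLipschitzEquiv (X \ K₁) (Y \ K₂)

/-- The germs `(X, p)` and `(Y, q)` are bi-Lipschitz equivalent. -/
def GermBiLipschitzEquiv {E F : Type*} [NormedAddCommGroup E] [NormedAddCommGroup F]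
    (X : Set E) (p : E) (Y : Set F) (q : F) : Prop :=
  ∃ (U : Set E) (V : Set F), IsOpen U ∧ IsOpen V ∧ p ∈ U ∧ q ∈ V ∧
    ∃ f : E → F, IsBiLipschitzOn f (X ∩ U) (Y ∩ V) ∧ f p = q

/-- `γ` maps `D` homeomorphically onto `S`. -/
def MapsHomeomorphicallyOnto {E : Type*} [TopologicalSpace E]
    (γ : ℂ → E) (D : Set ℂ) (S : Set E) : Prop :=
  Set.InjOn γ D ∧ γ '' D = S ∧ ContinuousOn γ D ∧
    ∃ σ : E → ℂ, ContinuousOn σ S ∧ ∀ z ∈ D, σ (γ z) = z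

/-- A regular point of a curve `X ⊂ ℂᵏ`: some neighborhood of `p` in `X` is the
homeomorphic image of an injective holomorphic map with nowhere-vanishing derivative. -/
def IsRegularPoint {k : ℕ} (X : Set (EuclideanSpace ℂ (Fin k)))
    (p : EuclideanSpace ℂ (Fin k)) : Prop :=
  ∃ (U : Set (EuclideanSpace ℂ (Fin k))) (D : Set ℂ) (γ : ℂ → EuclideanSpace ℂ (Fin k)),
    IsOpen U ∧ p ∈ U ∧ IsOpen D ∧ DifferentiableOn ℂ γ D ∧ Set.InjOn γ D ∧
    (∀ z ∈ D, deriv γ z ≠ 0) ∧ MapsHomeomorphicallyOnto γ D (X ∩ U)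

/-- The set of singular points of `X`. -/
def SingularSet {k : ℕ} (X : Set (EuclideanSpace ℂ (Fin k))) :
    Set (EuclideanSpace ℂ (Fin k)) :=
  {p ∈ X | ¬ IsRegularPoint X p}

/-- `B` is a (smooth) branch through `q` with tangent vector `v`. -/
def IsBranchAt (B : Set (EuclideanSpace ℂ (Fin 2))) (q v : EuclideanSpace ℂ (Fin 2)) : Prop :=
  ∃ (D : Set ℂ) (γ : ℂ → EuclideanSpace ℂ (Fin 2)) (z₀ : ℂ),
    IsOpen D ∧ z₀ ∈ D ∧ DifferentiableOn ℂ γ D ∧ Set.InjOn γ D ∧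
    (∀ z ∈ D, deriv γ z ≠ 0) ∧ MapsHomeomorphicallyOnto γ D B ∧
    γ z₀ = q ∧ deriv γ z₀ = v

/-- `q` is a node of the plane curve `Y`: near `q`, `Y` is the union of two smooth branches
meeting only at `q` with distinct tangent lines. -/
def IsNode (Y : Set (EuclideanSpace ℂ (Fin 2))) (q : EuclideanSpace ℂ (Fin 2)) : Prop :=
  q ∈ Y ∧ ∃ (U B₁ B₂ : Set (EuclideanSpace ℂ (Fin 2))) (v₁ v₂ : EuclideanSpace ℂ (Fin 2)),
    IsOpen U ∧ q ∈ U ∧ Y ∩ U = B₁ ∪ B₂ ∧ B₁ ∩ B₂ = {q} ∧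
    IsBranchAt B₁ q v₁ ∧ IsBranchAt B₂ q v₂ ∧ ∀ c : ℂ, v₂ ≠ c • v₁

/-- The set of points of `ℂ²` having more than one `π`-preimage in `X`. -/
def MultipleSet {n : ℕ} (π : EuclideanSpace ℂ (Fin n) →ₗ[ℂ] EuclideanSpace ℂ (Fin 2))
    (X : Set (EuclideanSpace ℂ (Fin n))) : Set (EuclideanSpace ℂ (Fin 2)) :=
  {q | ∃ x ∈ X, ∃ y ∈ X, x ≠ y ∧ π x = q ∧ π y = q}

/-- `π` is a generic plane projection for the algebraic curve `X ⊂ ℂⁿ`. -/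
def IsGenericPlaneProjection {n : ℕ}
    (π : EuclideanSpace ℂ (Fin n) →ₗ[ℂ] EuclideanSpace ℂ (Fin 2))
    (X : Set (EuclideanSpace ℂ (Fin n))) : Prop :=
  Function.Surjective π ∧
  (∀ K : Set (EuclideanSpace ℂ (Fin 2)), IsCompact K → IsCompact (X ∩ ⇑π ⁻¹' K)) ∧
  (MultipleSet π X).Finite ∧
  (∀ q ∈ MultipleSet π X, ∃ x y, x ≠ y ∧ {z ∈ X | π z = q} = {x, y} ∧
    IsRegularPoint X x ∧ IsRegularPoint X y) ∧
  (∀ q ∈ MultipleSet π X, IsNode (⇑π '' X) q) ∧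
  (∀ p ∈ X, π p ∉ MultipleSet π X →
    ∃ (U : Set (EuclideanSpace ℂ (Fin n))) (V : Set (EuclideanSpace ℂ (Fin 2))),
      IsOpen U ∧ IsOpen V ∧ p ∈ U ∧ π p ∈ V ∧
      IsBiLipschitzOn (⇑π) (X ∩ U) ((⇑π '' X) ∩ V))

/-- The complex projective plane `ℂP²`. -/
abbrev ProjPlane : Type := Projectivization ℂ (Fin 3 → ℂ)

instance : TopologicalSpace ProjPlane :=
  inferInstanceAs (TopologicalSpace (Quotient (projectivizationSetoid ℂ (Fin 3 → ℂ))))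

/-- The embedding `ℂ² → ℂP²`, `(x, y) ↦ (x : y : 1)`. -/
def toProj (p : EuclideanSpace ℂ (Fin 2)) : ProjPlane :=
  Projectivization.mk ℂ ![p 0, p 1, 1] (fun h => by simpa using congrFun h 2)

/-- The line at infinity in `ℂP²`. -/
def lineAtInfinity : Set ProjPlane := {P | P.rep 2 = 0}

/-- The projective closure of a plane curve `X ⊂ ℂ²`: the topological closure in `ℂP²`. -/
def projClosure (X : Set (EuclideanSpace ℂ (Fin 2))) : Set ProjPlane :=
  closure (toProj '' X)

/-- The germs `(A, p)` and `(B, q)` are (ambient) topologically equivalent. -/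
def GermTopEquiv {T : Type*} [TopologicalSpace T] (A : Set T) (p : T) (B : Set T) (q : T) :
    Prop :=
  ∃ (U V : Set T) (φ ψ : T → T),
    IsOpen U ∧ IsOpen V ∧ p ∈ U ∧ q ∈ V ∧
    ContinuousOn φ U ∧ ContinuousOn ψ V ∧ Set.MapsTo φ U V ∧ Set.MapsTo ψ V U ∧
    (∀ x ∈ U, ψ (φ x) = x) ∧ (∀ y ∈ V, φ (ψ y) = y) ∧
    φ p = q ∧ φ '' (A ∩ U) = B ∩ V

/-- The `i`-th standard affine chart of `ℂP²`. -/
def chart (i : Fin 3) (P : ProjPlane) : EuclideanSpace ℂ (Fin 2) :=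
  (EuclideanSpace.equiv (Fin 2) ℂ).symm fun j => P.rep (i.succAbove j) / P.rep i

/-- A regular point of a curve `C ⊂ ℂP²`: read in a standard affine chart, some neighborhood
of `p` in `C` is the homeomorphic image of an injective holomorphic map with
nowhere-vanishing derivative. -/
def IsRegularPointProj (C : Set ProjPlane) (p : ProjPlane) : Prop :=
  ∃ i : Fin 3, p.rep i ≠ 0 ∧
    ∃ W : Set ProjPlane, IsOpen W ∧ p ∈ W ∧ W ⊆ {P : ProjPlane | P.rep i ≠ 0} ∧
      ∃ (D : Set ℂ) (γ : ℂ → EuclideanSpace ℂ (Fin 2)),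
        IsOpen D ∧ DifferentiableOn ℂ γ D ∧ Set.InjOn γ D ∧ (∀ z ∈ D, deriv γ z ≠ 0) ∧
        MapsHomeomorphicallyOnto γ D (chart i '' (C ∩ W))

/-- The set of singular points of a curve `C ⊂ ℂP²`. -/
def SingularSetProj (C : Set ProjPlane) : Set ProjPlane :=
  {p ∈ C | ¬ IsRegularPointProj C p}

/-- `C` is an irreducible component of the algebraic curve `X`. -/
def IsIrreducibleComponent {k : ℕ} (C X : Set (EuclideanSpace ℂ (Fin k))) : Prop :=
  IsIrreducibleAlgebraicCurve C ∧ C ⊆ X ∧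
    ∀ C', IsIrreducibleAlgebraicCurve C' → C' ⊆ X → C ⊆ C' → C' = C

/-- The degree of an algebraic plane curve: the minimal degree of a nonzero polynomial
vanishing identically on it. -/
def curveDegree (X : Set (EuclideanSpace ℂ (Fin 2))) : ℕ :=
  sInf {d | ∃ P : MvPolynomial (Fin 2) ℂ, P ≠ 0 ∧ P.totalDegree = d ∧
    ∀ x ∈ X, MvPolynomial.eval (fun i => x i) P = 0}

/-!
A squarefree equation `P` of the curve has degree equal to the degree of the curve, and after a
shear no vertical line is asymptotic to the curve. Far from the branch points the projection
`(x, y) ↦ x` is then a covering of degree `deg P`, and the curve goes to infinity along finitely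
many lines `y = t x`. The part of the curve asymptotic to the line of slope `t` has a multiplicity
`m t`, its number of sheets over the `x`-axis, and `∑ t, m t = deg P`.

Two points of the same part can be joined by chains of arbitrarily small relative steps, whereas
different parts are at a distance comparable to the norm, so a bi-Lipschitz map at infinity
matches the parts of the two curves. In a ball about `z` of radius a small multiple of `‖z‖`,
distinct sheets of the part containing `z` lie in distinct connected components, so their number
`m t` is determined by the metric up to bi-Lipschitz maps: the matching preserves `m t`, and the
degrees agree.
-/

open Bornology Filter Topology

section Ends

variable {E F : Type*} [NormedAddCommGroup E] [NormedAddCommGroup F] {ι κ : Type*}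

/-- The filter of neighbourhoods of infinity in the set `Z`. -/
def atInfinity (Z : Set E) : Filter E := cobounded E ⊓ 𝓟 Z

theorem hasBasis_atInfinity (Z : Set E) :
    (atInfinity Z).HasBasis (fun _ : ℝ => True) fun R => {z | R < ‖z‖ ∧ z ∈ Z} := by
  rw [atInfinity, ← comap_norm_atTop]
  exact (atTop_basis_Ioi.comap norm).inf_principal Z

theorem eventually_atInfinity {Z : Set E} {p : E → Prop} :
    (∀ᶠ z in atInfinity Z, p z) ↔ ∃ R : ℝ, ∀ z ∈ Z, R < ‖z‖ → p z := by
  simp only [(hasBasis_atInfinity Z).eventually_iff, true_and, mem_ofPred_eq]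
  exact exists_congr fun R => ⟨fun h z hz hR => h ⟨hR, hz⟩, fun h z hz => h z hz.2 hz.1⟩

theorem eventually_lt_norm_atInfinity (Z : Set E) (R : ℝ) :
    ∀ᶠ z in atInfinity Z, R < ‖z‖ :=
  eventually_atInfinity.2 ⟨R, fun _ _ h => h⟩

theorem eventually_mem_atInfinity (Z : Set E) : ∀ᶠ z in atInfinity Z, z ∈ Z :=
  mem_inf_of_right (mem_principal_self Z)

theorem eventually_forall_norm_sub_le {Z : Set E} {p : E → Prop}
    (hp : ∀ᶠ z in atInfinity Z, p z) :
    ∀ᶠ z in atInfinity Z, ∀ w ∈ Z, ‖w - z‖ ≤ 1 / 2 * ‖z‖ → p w := by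
  obtain ⟨R, hR⟩ := eventually_atInfinity.1 hp
  filter_upwards [eventually_lt_norm_atInfinity Z (2 * R)] with z hz w hw hwz
  refine hR w hw ?_
  linarith [norm_sub_norm_le z w, norm_sub_rev z w]

/-- `f` and `g` are, near infinity, mutually inverse Lipschitz maps between `X` and `Y`; the
constant `M` also controls the distortion of the norm. -/
structure IsBiLipschitzAtInfinity (f : E → F) (g : F → E) (X : Set E) (Y : Set F) (M : ℝ) :
    Prop where
  pos : 0 < M
  tendsto : Tendsto f (atInfinity X) (atInfinity Y)
  tendsto_inv : Tendsto g (atInfinity Y) (atInfinity X)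
  left_inv : ∀ᶠ x in atInfinity X, g (f x) = x
  right_inv : ∀ᶠ y in atInfinity Y, f (g y) = y
  lipschitz : ∀ᶠ p in atInfinity X ×ˢ atInfinity X, ‖f p.1 - f p.2‖ ≤ M * ‖p.1 - p.2‖
  lipschitz_inv : ∀ᶠ p in atInfinity Y ×ˢ atInfinity Y, ‖g p.1 - g p.2‖ ≤ M * ‖p.1 - p.2‖
  norm_le : ∀ᶠ x in atInfinity X, ‖f x‖ ≤ M * ‖x‖
  norm_inv_le : ∀ᶠ y in atInfinity Y, ‖g y‖ ≤ M * ‖y‖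

/-- Near infinity `Z` looks like finitely many cones: `T` indexes the directions in which `Z`
goes to infinity, `label z` is the direction of `z`, and `m t` is the number of local sheets of
`Z` in direction `t`. Distances at `z` are measured relative to `‖z‖`, so that every condition is
meaningful for a set known up to bi-Lipschitz maps. -/
structure HasConicalEnds (Z : Set E) (label : E → ι) (T : Finset ι) (m : ι → ℕ) : Prop where
  label_mem : ∀ᶠ z in atInfinity Z, label z ∈ T
  frequently_label : ∀ t ∈ T, ∃ᶠ z in atInfinity Z, label z = t
  label_eq : ∃ c > 0, ∀ᶠ p in atInfinity Z ×ˢ atInfinity Z,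
    ‖p.1 - p.2‖ ≤ c * ‖p.1‖ → label p.1 = label p.2
  chain : ∀ ε > 0, ∀ s ∈ atInfinity Z, ∀ᶠ p in atInfinity Z ×ˢ atInfinity Z,
    label p.1 = label p.2 →
      Relation.EqvGen (fun w w' => w ∈ s ∧ w' ∈ s ∧ ‖w - w'‖ ≤ ε * ‖w‖) p.1 p.2
  sheets_ge : ∃ c > 0, ∀ ε > 0, ∀ᶠ z in atInfinity Z, ∃ V : Finset E, V.card = m (label z) ∧
    ↑V ⊆ Z ∩ closedBall z (ε * ‖z‖) ∧
    ∀ v ∈ V, ∀ v' ∈ V, v' ∈ connectedComponentIn (Z ∩ ball z (c * ‖z‖)) v → v = v'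
  sheets_le : ∀ δ > 0, ∃ ε > 0, ∀ᶠ z in atInfinity Z, ∃ V : Finset E, V.card = m (label z) ∧
    ∀ w ∈ Z ∩ closedBall z (ε * ‖z‖),
      ∃ v ∈ V, v ∈ connectedComponentIn (Z ∩ ball z (δ * ‖z‖)) w

namespace IsBiLipschitzAtInfinity

variable {X : Set E} {Y : Set F} {f : E → F} {g : F → E} {M : ℝ}

theorem symm (h : IsBiLipschitzAtInfinity f g X Y M) : IsBiLipschitzAtInfinity g f Y X M :=
  ⟨h.pos, h.tendsto_inv, h.tendsto, h.right_inv, h.left_inv, h.lipschitz_inv,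
    h.lipschitz, h.norm_inv_le, h.norm_le⟩

theorem congr_set {X' : Set E} {Y' : Set F}
    (h : IsBiLipschitzAtInfinity f g X Y M) (hX : atInfinity X = atInfinity X')
    (hY : atInfinity Y = atInfinity Y') : IsBiLipschitzAtInfinity f g X' Y' M := by
  cases h
  constructor <;> first | assumption | simpa only [← hX, ← hY]

theorem le_norm (h : IsBiLipschitzAtInfinity f g X Y M) :
    ∀ᶠ x in atInfinity X, ‖x‖ ≤ M * ‖f x‖ := by
  filter_upwards [h.left_inv, h.tendsto.eventually h.norm_inv_le] with x hx hle
  rwa [hx] at hle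

theorem exists_mem_norm_sub_le (h : IsBiLipschitzAtInfinity f g X Y M) :
    ∃ s ∈ atInfinity X, ∀ x ∈ s, ∀ x' ∈ s, ‖f x - f x'‖ ≤ M * ‖x - x'‖ := by
  obtain ⟨s, hs, hlip⟩ := eventually_prod_self_iff'.1 h.lipschitz
  exact ⟨s, hs, hlip⟩

theorem exists_mapsTo_closedBall (h : IsBiLipschitzAtInfinity f g X Y M) {r : ℝ} (hr : 0 < r) :
    ∃ ρ > 0, ∀ᶠ x in atInfinity X,
      MapsTo f (X ∩ closedBall x (ρ * ‖x‖)) (Y ∩ ball (f x) (r * ‖f x‖)) ∧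
      ContinuousOn f (X ∩ closedBall x (ρ * ‖x‖)) ∧
      LeftInvOn g f (X ∩ closedBall x (ρ * ‖x‖)) := by
  have hM := h.pos
  obtain ⟨s, hs, hlip⟩ := h.exists_mem_norm_sub_le
  refine ⟨min (1 / 2) (r / (2 * M ^ 2)), by positivity, ?_⟩
  set ρ := min (1 / 2) (r / (2 * M ^ 2))
  have hρr : 2 * M ^ 2 * ρ ≤ r := by
    rw [mul_comm, ← le_div_iff₀ (by positivity)]
    exact min_le_right _ _
  filter_upwards [hs, h.le_norm, eventually_lt_norm_atInfinity X 0,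
    eventually_forall_norm_sub_le (Filter.Eventually.and hs (h.left_inv.and
      (h.tendsto.eventually (eventually_mem_atInfinity Y))))] with x hxs hle hpos hnear
  have hnear : ∀ w ∈ X ∩ closedBall x (ρ * ‖x‖), w ∈ s ∧ g (f w) = w ∧ f w ∈ Y := fun w hw =>
    hnear w hw.1 ((mem_closedBall_iff_norm.1 hw.2).trans (by gcongr; exact min_le_left _ _))
  refine ⟨fun w hw => ⟨(hnear w hw).2.2, mem_ball_iff_norm.2 ?_⟩, ?_, fun w hw => (hnear w hw).2.1⟩
  · have hf : 0 < ‖f x‖ := pos_of_mul_pos_right (hpos.trans_le hle) hM.le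
    calc ‖f w - f x‖ ≤ M * ‖w - x‖ := hlip w (hnear w hw).1 x hxs
      _ ≤ M * (ρ * (M * ‖f x‖)) := by
        gcongr
        exact (mem_closedBall_iff_norm.1 hw.2).trans (by gcongr)
      _ = (2 * M ^ 2 * ρ) / 2 * ‖f x‖ := by ring
      _ < r * ‖f x‖ := by gcongr; linarith
  · refine (LipschitzOnWith.of_dist_le' (K := M) fun w hw w' hw' => ?_).continuousOn
    simpa only [dist_eq_norm] using hlip w (hnear w hw).1 w' (hnear w' hw').1

variable {label : E → ι} {label' : F → κ} {T : Finset ι} {T' : Finset κ} {m : ι → ℕ} {m' : κ → ℕ}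

theorem label_eq (h : IsBiLipschitzAtInfinity f g X Y M) (hX : HasConicalEnds X label T m)
    (hY : HasConicalEnds Y label' T' m') :
    ∀ᶠ p in atInfinity X ×ˢ atInfinity X,
      label' (f p.1) = label' (f p.2) → label p.1 = label p.2 := by
  have hM := h.pos
  obtain ⟨c, hc, hsep⟩ := hX.label_eq
  obtain ⟨s, hs, hlip⟩ := h.symm.exists_mem_norm_sub_le
  obtain ⟨s', hs', hsep⟩ := eventually_prod_self_iff'.1
    ((h.tendsto_inv.prodMap h.tendsto_inv).eventually hsep)
  have hs'' : s ∩ s' ∩ {y | ‖y‖ ≤ M * ‖g y‖} ∈ atInfinity Y :=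
    inter_mem (inter_mem hs hs') h.symm.le_norm
  have hchain := hY.chain (c / M ^ 2) (by positivity) _ hs''
  filter_upwards [(h.tendsto.prodMap h.tendsto).eventually hchain,
    h.left_inv.prod_mk h.left_inv] with p hp hinv heq
  have hstep : ∀ w w', (w ∈ s ∩ s' ∩ {y | ‖y‖ ≤ M * ‖g y‖} ∧
      w' ∈ s ∩ s' ∩ {y | ‖y‖ ≤ M * ‖g y‖} ∧ ‖w - w'‖ ≤ c / M ^ 2 * ‖w‖) →
      label (g w) = label (g w') := by
    rintro w w' ⟨⟨⟨hw, hw'⟩, hwn⟩, ⟨⟨hv, hv'⟩, -⟩, hwv⟩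
    refine hsep w hw' w' hv' ?_
    calc ‖g w - g w'‖ ≤ M * ‖w - w'‖ := hlip w hw w' hv
      _ ≤ M * (c / M ^ 2 * (M * ‖g w‖)) := by gcongr; exact hwv.trans (by gcongr; exact hwn)
      _ = c * ‖g w‖ := by field_simp
  have := (hp heq).mono hstep
  rw [← hinv.1, ← hinv.2]
  exact (Equivalence.eqvGen_iff (eq_equivalence.comap (label ∘ g))).1 this

theorem multiplicity_le (h : IsBiLipschitzAtInfinity f g X Y M) (hX : HasConicalEnds X label T m)
    (hY : HasConicalEnds Y label' T' m') :
    ∀ᶠ x in atInfinity X, m (label x) ≤ m' (label' (f x)) := by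
  obtain ⟨c, hc, hge⟩ := hX.sheets_ge
  obtain ⟨δ, hδ, hg⟩ := h.symm.exists_mapsTo_closedBall hc
  obtain ⟨ε', hε', hle⟩ := hY.sheets_le δ hδ
  obtain ⟨ε, hε, hf⟩ := h.exists_mapsTo_closedBall hε'
  filter_upwards [hge ε hε, h.tendsto.eventually hg, h.tendsto.eventually hle, hf, h.left_inv]
    with x ⟨V, hVcard, hV, hVsep⟩ ⟨hgmaps, hgcont, _⟩ ⟨V', hV'card, hV'⟩ ⟨hfmaps, _, hinv⟩ hx
  rw [hx] at hgmaps
  have hsub : Y ∩ ball (f x) (δ * ‖f x‖) ⊆ Y ∩ closedBall (f x) (δ * ‖f x‖) :=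
    inter_subset_inter_right _ ball_subset_closedBall
  have hmem : ∀ v ∈ V, f v ∈ Y ∩ closedBall (f x) (ε' * ‖f x‖) := fun v hv =>
    inter_subset_inter_right _ ball_subset_closedBall (hfmaps (hV hv))
  choose! σ hσ hσc using fun v hv => hV' (f v) (hmem v hv)
  rw [← hVcard, ← hV'card]
  refine Finset.card_le_card_of_injOn σ hσ fun v hv w hw hvw => hVsep v hv w hw ?_
  have hvw' : f w ∈ connectedComponentIn (Y ∩ ball (f x) (δ * ‖f x‖)) (f v) := by
    rw [connectedComponentIn_eq (hσc v hv), hvw, ← connectedComponentIn_eq (hσc w hw)]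
    exact mem_connectedComponentIn (connectedComponentIn_nonempty_iff.1 ⟨_, hσc w hw⟩)
  have hmem_v : f v ∈ Y ∩ ball (f x) (δ * ‖f x‖) :=
    connectedComponentIn_nonempty_iff.1 ⟨_, hvw'⟩
  have := connectedComponentIn_mono _ (hgmaps.mono_left hsub).image_subset
    ((hgcont.mono hsub).mapsTo_connectedComponentIn hmem_v hvw')
  rwa [hinv (hV hv), hinv (hV hw)] at this

theorem sum_multiplicity_le (h : IsBiLipschitzAtInfinity f g X Y M)
    (hX : HasConicalEnds X label T m) (hY : HasConicalEnds Y label' T' m') :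
    ∑ t ∈ T, m t ≤ ∑ t ∈ T', m' t := by
  classical
  obtain ⟨s, hs, hlabel⟩ := eventually_prod_self_iff'.1 (h.label_eq hX hY)
  have hgood := Filter.Eventually.and hs
    ((h.multiplicity_le hX hY).and (h.tendsto.eventually hY.label_mem))
  have hex : ∀ t ∈ T, ∃ x ∈ s, label x = t ∧ label' (f x) ∈ T' ∧ m t ≤ m' (label' (f x)) := by
    intro t ht
    obtain ⟨x, rfl, hxs, hxm, hxT⟩ := ((hX.frequently_label t ht).and_eventually hgood).exists
    exact ⟨x, hxs, rfl, hxT, hxm⟩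
  choose! x hxs hxlabel hxT hxm using hex
  have hinj : InjOn (fun t => label' (f (x t))) T := fun t ht t' ht' heq => by
    rw [← hxlabel t ht, ← hxlabel t' ht']
    exact hlabel _ (hxs t ht) _ (hxs t' ht') heq
  calc ∑ t ∈ T, m t ≤ ∑ t ∈ T, m' (label' (f (x t))) := Finset.sum_le_sum hxm
    _ = ∑ t ∈ T.image fun t => label' (f (x t)), m' t := (Finset.sum_image hinj).symm
    _ ≤ ∑ t ∈ T', m' t := Finset.sum_le_sum_of_subset (Finset.image_subset_iff.2 hxT)

theorem sum_multiplicity_eq (h : IsBiLipschitzAtInfinity f g X Y M)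
    (hX : HasConicalEnds X label T m) (hY : HasConicalEnds Y label' T' m') :
    ∑ t ∈ T, m t = ∑ t ∈ T', m' t :=
  (h.sum_multiplicity_le hX hY).antisymm (h.symm.sum_multiplicity_le hY hX)

end IsBiLipschitzAtInfinity

end Ends

section BiLipschitz

variable {E F G : Type*} [NormedAddCommGroup E] [NormedAddCommGroup F] [NormedAddCommGroup G]

theorem atInfinity_diff {K : Set E} (hK : IsBounded K) (X : Set E) :
    atInfinity (X \ K) = atInfinity X := by
  rw [atInfinity, sdiff_eq, inter_comm, ← inf_principal, ← inf_assoc,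
    inf_eq_left.2 (le_principal_iff.2 hK), atInfinity]

theorem eventually_norm_le_of_lipschitz {X : Set E} {f : E → F} {C : ℝ}
    (hf : ∀ x ∈ X, ∀ x' ∈ X, ‖f x - f x'‖ ≤ C * ‖x - x'‖) :
    ∀ᶠ x in atInfinity X, ‖f x‖ ≤ (|C| + 1) * ‖x‖ := by
  obtain rfl | ⟨x₀, hx₀⟩ := X.eq_empty_or_nonempty
  · simp [atInfinity]
  filter_upwards [eventually_mem_atInfinity X,
    eventually_lt_norm_atInfinity X (‖f x₀‖ + |C| * ‖x₀‖)] with x hx hR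
  calc ‖f x‖ ≤ ‖f x₀‖ + ‖f x - f x₀‖ := norm_le_insert' _ _
    _ ≤ ‖f x₀‖ + |C| * (‖x‖ + ‖x₀‖) := by
      gcongr
      calc ‖f x - f x₀‖ ≤ C * ‖x - x₀‖ := hf x hx x₀ hx₀
        _ ≤ |C| * (‖x‖ + ‖x₀‖) := by gcongr; exacts [le_abs_self C, norm_sub_le x x₀]
    _ ≤ (|C| + 1) * ‖x‖ := by linarith

theorem tendsto_atInfinity_of_antilipschitz {X : Set E} {Y : Set F} {f : E → F} {C : ℝ}
    (hXY : MapsTo f X Y) (hf : ∀ x ∈ X, ∀ x' ∈ X, ‖x - x'‖ ≤ C * ‖f x - f x'‖) :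
    Tendsto f (atInfinity X) (atInfinity Y) := by
  obtain rfl | ⟨x₀, hx₀⟩ := X.eq_empty_or_nonempty
  · simp [atInfinity]
  refine (hasBasis_atInfinity Y).tendsto_right_iff.2 fun R _ => ?_
  filter_upwards [eventually_mem_atInfinity X,
    eventually_lt_norm_atInfinity X (‖x₀‖ + |C| * (R + ‖f x₀‖))] with x hx hR
  refine ⟨lt_of_not_ge fun hle => hR.not_ge ?_, hXY hx⟩
  calc ‖x‖ ≤ ‖x₀‖ + ‖x - x₀‖ := norm_le_insert' _ _
    _ ≤ ‖x₀‖ + C * ‖f x - f x₀‖ := by gcongr; exact hf x hx x₀ hx₀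
    _ ≤ ‖x₀‖ + |C| * (R + ‖f x₀‖) := by
      gcongr
      exacts [le_abs_self C, (norm_sub_le _ _).trans (by gcongr)]

namespace IsBiLipschitzOn

variable {X : Set E} {Y : Set F} {Z : Set G} {f : E → F}

theorem exists_isBiLipschitzAtInfinity (h : IsBiLipschitzOn f X Y) :
    ∃ g M, IsBiLipschitzAtInfinity f g X Y M := by
  obtain ⟨hbij, C, hC, hf⟩ := h
  have hf' : ∀ x ∈ X, ∀ x' ∈ X, ‖x - x'‖ ≤ C * ‖f x - f x'‖ := fun x hx x' hx' => by
    rw [← inv_mul_le_iff₀ (by positivity)]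
    exact (hf x hx x' hx').1
  set g := Function.invFunOn f X
  have hg : InvOn g f X Y := hbij.invOn_invFunOn
  have hgm : MapsTo g Y X := hg.1.mapsTo hbij.surjOn
  have hg1 : ∀ y ∈ Y, ∀ y' ∈ Y, ‖g y - g y'‖ ≤ C * ‖y - y'‖ := fun y hy y' hy' => by
    simpa only [hg.2 hy, hg.2 hy'] using hf' _ (hgm hy) _ (hgm hy')
  have hg2 : ∀ y ∈ Y, ∀ y' ∈ Y, ‖y - y'‖ ≤ C * ‖g y - g y'‖ := fun y hy y' hy' => by
    simpa only [hg.2 hy, hg.2 hy'] using (hf _ (hgm hy) _ (hgm hy')).2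
  have hX := eventually_mem_atInfinity X
  have hY := eventually_mem_atInfinity Y
  have hle : C ≤ |C| + 1 := (le_abs_self C).trans (lt_add_one _).le
  exact ⟨g, |C| + 1,
    { pos := by positivity
      tendsto := tendsto_atInfinity_of_antilipschitz hbij.mapsTo hf'
      tendsto_inv := tendsto_atInfinity_of_antilipschitz hgm hg2
      left_inv := hX.mono fun _ => @hg.1 _
      right_inv := hY.mono fun _ => @hg.2 _
      lipschitz := (hX.prod_mk hX).mono fun p hp =>
        (hf _ hp.1 _ hp.2).2.trans (by gcongr)
      lipschitz_inv := (hY.prod_mk hY).mono fun p hp => (hg1 _ hp.1 _ hp.2).trans (by gcongr)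
      norm_le := eventually_norm_le_of_lipschitz fun x hx x' hx' => (hf x hx x' hx').2
      norm_inv_le := eventually_norm_le_of_lipschitz hg1 }⟩

theorem comp {g : F → G} (hg : IsBiLipschitzOn g Y Z) (hf : IsBiLipschitzOn f X Y) :
    IsBiLipschitzOn (g ∘ f) X Z := by
  obtain ⟨hgb, C, hC, hg⟩ := hg
  obtain ⟨hfb, D, hD, hf⟩ := hf
  refine ⟨hgb.comp hfb, C * D, one_le_mul_of_one_le_of_one_le hC hD, fun x hx x' hx' => ?_⟩
  obtain ⟨hg1, hg2⟩ := hg _ (hfb.mapsTo hx) _ (hfb.mapsTo hx')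
  obtain ⟨hf1, hf2⟩ := hf x hx x' hx'
  constructor
  · calc (C * D)⁻¹ * ‖x - x'‖ = C⁻¹ * (D⁻¹ * ‖x - x'‖) := by rw [mul_inv, mul_assoc]
      _ ≤ C⁻¹ * ‖f x - f x'‖ := by gcongr
      _ ≤ _ := hg1
  · calc ‖g (f x) - g (f x')‖ ≤ C * ‖f x - f x'‖ := hg2
      _ ≤ C * (D * ‖x - x'‖) := by gcongr
      _ = C * D * ‖x - x'‖ := (mul_assoc _ _ _).symm

end IsBiLipschitzOn

section Linear

variable {𝕜 : Type*} [NontriviallyNormedField 𝕜] [NormedSpace 𝕜 E] [NormedSpace 𝕜 F]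
  {E' F' : Type*} [NormedAddCommGroup E'] [NormedAddCommGroup F'] [NormedSpace 𝕜 E']
  [NormedSpace 𝕜 F']

theorem isBiLipschitzOn_image (e : E ≃L[𝕜] F) (X : Set E) : IsBiLipschitzOn e X (e '' X) := by
  set A := ‖(e : E →L[𝕜] F)‖
  set B := ‖(e.symm : F →L[𝕜] E)‖
  have hA : 0 ≤ A := norm_nonneg _
  have hB : 0 ≤ B := norm_nonneg _
  refine ⟨e.injective.injOn.bijOn_image, A + B + 1, by linarith, fun x _ x' _ => ?_⟩
  rw [inv_mul_le_iff₀ (by positivity), ← map_sub]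
  constructor
  · calc ‖x - x'‖ = ‖e.symm (e (x - x'))‖ := by rw [e.symm_apply_apply]
      _ ≤ B * ‖e (x - x')‖ := (e.symm : F →L[𝕜] E).le_opNorm _
      _ ≤ (A + B + 1) * ‖e (x - x')‖ := by gcongr; linarith
  · calc ‖e (x - x')‖ ≤ A * ‖x - x'‖ := (e : E →L[𝕜] F).le_opNorm _
      _ ≤ (A + B + 1) * ‖x - x'‖ := by gcongr; linarith

theorem BiLipschitzEquivAtInfinity.exists_isBiLipschitzAtInfinity_image {X : Set E} {Y : Set F}
    (h : BiLipschitzEquivAtInfinity X Y) (e : E ≃L[𝕜] E') (e' : F ≃L[𝕜] F') :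
    ∃ f g M, IsBiLipschitzAtInfinity f g (e '' X) (e' '' Y) M := by
  obtain ⟨K, K', hK, hK', f, hf⟩ := h
  have he := isBiLipschitzOn_image e.symm (e '' (X \ K))
  rw [e.symm_image_image] at he
  obtain ⟨g, M, h⟩ :=
    ((isBiLipschitzOn_image e' _).comp (hf.comp he)).exists_isBiLipschitzAtInfinity
  rw [image_sdiff e.injective, image_sdiff e'.injective] at h
  exact ⟨_, g, M, h.congr_set (atInfinity_diff (hK.image e.continuous).isBounded _)
    (atInfinity_diff (hK'.image e'.continuous).isBounded _)⟩

end Linear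

end BiLipschitz

section Cobounded

variable {E : Type*} [NormedAddCommGroup E] [NormedSpace ℝ E]

theorem isPreconnected_setOf_lt_norm (hE : 1 < Module.rank ℝ E) {R : ℝ} (hR : 0 ≤ R) :
    IsPreconnected {x : E | R < ‖x‖} := by
  have himage : (fun p : ℝ × E => p.1 • p.2) '' (Ioi R ×ˢ sphere 0 1) = {x : E | R < ‖x‖} := by
    ext x
    constructor
    · rintro ⟨⟨r, y⟩, ⟨hr, hy⟩, rfl⟩
      simpa [norm_smul, mem_sphere_zero_iff_norm.1 hy] using hr.out.trans_le (le_abs_self r)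
    · intro hx
      have hx0 : ‖x‖ ≠ 0 := (hR.trans_lt hx).ne'
      exact ⟨(‖x‖, ‖x‖⁻¹ • x), ⟨hx, by simp [norm_smul, hx0]⟩, smul_inv_smul₀ hx0 x⟩
  rw [← himage]
  exact (isPreconnected_Ioi.prod (isPreconnected_sphere hE 0 1)).image _ (by fun_prop)

theorem eventually_cobounded_of_norm_sub_le (hE : 1 < Module.rank ℝ E) {P : E → E → Prop} {κ : ℝ}
    (hκ : 0 < κ) (hsymm : ∀ u v, P u v → P v u) (htrans : ∀ u v w, P u v → P v w → P u w)
    (h : ∀ᶠ p in cobounded E ×ˢ cobounded E, ‖p.1 - p.2‖ ≤ κ * ‖p.1‖ → P p.1 p.2) :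
    ∀ᶠ p in cobounded E ×ˢ cobounded E, P p.1 p.2 := by
  obtain ⟨s, hs, h⟩ := eventually_prod_self_iff'.1 h
  obtain ⟨R, -, hR⟩ := atTop_basis_Ioi.cobounded_of_norm.mem_iff.1 hs
  have hfar : ∀ᶠ u in cobounded E, max R 0 < ‖u‖ :=
    atTop_basis_Ioi.cobounded_of_norm.mem_of_mem trivial
  have hmem : ∀ u : E, max R 0 < ‖u‖ → u ∈ s := fun u hu => hR ((le_max_left _ _).trans_lt hu)
  filter_upwards [hfar.prod_mk hfar] with p hp
  refine (isPreconnected_setOf_lt_norm hE (le_max_right R 0)).induction₂ P (fun u hu => ?_)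
    (fun u v w _ _ _ => htrans u v w) (fun u v _ _ => hsymm u v) hp.1 hp.2
  have hu0 : 0 < ‖u‖ := (le_max_right R 0).trans_lt hu
  filter_upwards [self_mem_nhdsWithin, mem_nhdsWithin_of_mem_nhds
    (closedBall_mem_nhds u (mul_pos hκ hu0))] with v hv hvu
  exact h u (hmem u hu) v (hmem v hv) (mem_closedBall_iff_norm'.1 hvu)

end Cobounded

section Slopes

variable {𝕜 : Type*} [NormedField 𝕜]

/-- Towards infinity, `Z` is asymptotic to the lines `v = t * u` with `t ∈ T`; the line approached
by `z` has slope `label z`. -/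
def HasAsymptoticSlopes (Z : Set (𝕜 × 𝕜)) (label : 𝕜 × 𝕜 → 𝕜) (T : Finset 𝕜) : Prop :=
  ∀ η > 0, ∀ᶠ z in atInfinity Z, label z ∈ T ∧ ‖z.2 - label z * z.1‖ ≤ η * ‖z.1‖

variable {Z : Set (𝕜 × 𝕜)} {label : 𝕜 × 𝕜 → 𝕜} {T : Finset 𝕜}

theorem exists_hasAsymptoticSlopes
    (h : ∀ η > 0, ∀ᶠ z in atInfinity Z, ∃ t ∈ T, ‖z.2 - t * z.1‖ ≤ η * ‖z.1‖) :
    ∃ label, HasAsymptoticSlopes Z label T := by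
  have hnearest : ∀ z : 𝕜 × 𝕜, ∃ s, ∀ t ∈ T, s ∈ T ∧ ‖z.2 - s * z.1‖ ≤ ‖z.2 - t * z.1‖ := by
    intro z
    obtain rfl | hT := T.eq_empty_or_nonempty
    · simp
    · obtain ⟨s, hs, hle⟩ := T.exists_min_image (fun t => ‖z.2 - t * z.1‖) hT
      exact ⟨s, fun t ht => ⟨hs, hle t ht⟩⟩
  choose label hlabel using hnearest
  refine ⟨label, fun η hη => (h η hη).mono ?_⟩
  rintro z ⟨t, ht, hz⟩
  exact ⟨(hlabel z t ht).1, (hlabel z t ht).2.trans hz⟩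

theorem exists_pos_eq_of_norm_sub_lt {E : Type*} [NormedAddCommGroup E] (T : Finset E) :
    ∃ θ > 0, ∀ t ∈ T, ∀ t' ∈ T, ‖t - t'‖ < θ → t = t' := by
  obtain hT | hT := (T : Set E).subsingleton_or_nontrivial
  · exact ⟨1, one_pos, fun t ht t' ht' _ => hT ht ht'⟩
  · refine ⟨_, (T.infsep_pos_iff_nontrivial).2 hT, fun t ht t' ht' hlt => ?_⟩
    by_contra hne
    exact hlt.not_ge ((infsep_le_dist_of_mem ht ht' hne).trans_eq (dist_eq_norm t t'))

theorem exists_norm_le_of_mem (T : Finset 𝕜) : ∃ L : ℝ, 0 ≤ L ∧ ∀ t ∈ T, ‖t‖ ≤ L :=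
  ⟨∑ t ∈ T, ‖t‖, by positivity,
    fun t ht => Finset.single_le_sum (f := fun t => ‖t‖) (fun t _ => norm_nonneg t) ht⟩

theorem norm_slope_sub_mul_norm_le {z z' : 𝕜 × 𝕜} {t t' : 𝕜} {η L ρ : ℝ} (hη : 0 ≤ η)
    (ht' : ‖t'‖ ≤ L) (hz : ‖z.2 - t * z.1‖ ≤ η * ‖z.1‖) (hz' : ‖z'.2 - t' * z'.1‖ ≤ η * ‖z'.1‖)
    (hzz' : ‖z - z'‖ ≤ ρ) : ‖t - t'‖ * ‖z.1‖ ≤ 2 * η * ‖z.1‖ + (η + 1 + L) * ρ := by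
  have hL : 0 ≤ L := (norm_nonneg _).trans ht'
  have h1 : ‖z.1 - z'.1‖ ≤ ρ := (norm_fst_le (z - z')).trans hzz'
  have h2 : ‖z.2 - z'.2‖ ≤ ρ := (norm_snd_le (z - z')).trans hzz'
  calc ‖t - t'‖ * ‖z.1‖
      = ‖((z'.2 - t' * z'.1) - (z.2 - t * z.1)) + ((z.2 - z'.2) - t' * (z.1 - z'.1))‖ := by
        rw [← norm_mul]; congr 1; ring
    _ ≤ (‖z'.2 - t' * z'.1‖ + ‖z.2 - t * z.1‖) + (‖z.2 - z'.2‖ + ‖t'‖ * ‖z.1 - z'.1‖) := by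
      rw [← norm_mul]
      exact (norm_add_le _ _).trans (add_le_add (norm_sub_le _ _) (norm_sub_le _ _))
    _ ≤ (η * (‖z.1‖ + ρ) + η * ‖z.1‖) + (ρ + L * ρ) := by
      gcongr
      exact hz'.trans (by gcongr; exact (norm_le_norm_add_norm_sub _ _).trans (by gcongr))
    _ = 2 * η * ‖z.1‖ + (η + 1 + L) * ρ := by ring

theorem norm_sub_le_of_slope {z z' : 𝕜 × 𝕜} {t : 𝕜} {η L ρ : ℝ} (hη : 0 ≤ η) (ht : ‖t‖ ≤ L)
    (hz : ‖z.2 - t * z.1‖ ≤ η * ‖z.1‖) (hz' : ‖z'.2 - t * z'.1‖ ≤ η * ‖z'.1‖)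
    (hzz' : ‖z.1 - z'.1‖ ≤ ρ) : ‖z - z'‖ ≤ 2 * η * ‖z.1‖ + (η + 1 + L) * ρ := by
  have hρ : 0 ≤ ρ := (norm_nonneg _).trans hzz'
  have hL : 0 ≤ L := (norm_nonneg _).trans ht
  have hηz : 0 ≤ η * ‖z.1‖ := by positivity
  have hηρ : 0 ≤ η * ρ := by positivity
  have hLρ : 0 ≤ L * ρ := by positivity
  refine max_le (by change ‖z.1 - z'.1‖ ≤ _; linarith) ?_
  calc ‖z.2 - z'.2‖ = ‖((z.2 - t * z.1) - (z'.2 - t * z'.1)) + t * (z.1 - z'.1)‖ := by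
        congr 1; ring
    _ ≤ (‖z.2 - t * z.1‖ + ‖z'.2 - t * z'.1‖) + ‖t‖ * ‖z.1 - z'.1‖ := by
      rw [← norm_mul]
      exact (norm_add_le _ _).trans (by gcongr; exact norm_sub_le _ _)
    _ ≤ (η * ‖z.1‖ + η * (‖z.1‖ + ρ)) + L * ρ := by
      gcongr
      exact hz'.trans (by gcongr; exact (norm_le_norm_add_norm_sub _ _).trans (by gcongr))
    _ ≤ 2 * η * ‖z.1‖ + (η + 1 + L) * ρ := by linarith

namespace HasAsymptoticSlopes

theorem exists_norm_le (h : HasAsymptoticSlopes Z label T) :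
    ∃ A ≥ 1, ∀ᶠ z in atInfinity Z, ‖z‖ ≤ A * ‖z.1‖ := by
  obtain ⟨L, hL, hT⟩ := exists_norm_le_of_mem T
  refine ⟨L + 1, by linarith, ?_⟩
  filter_upwards [h 1 one_pos] with z hz
  refine max_le (le_mul_of_one_le_left (norm_nonneg _) (by linarith)) ?_
  calc ‖z.2‖ ≤ ‖label z * z.1‖ + ‖z.2 - label z * z.1‖ := norm_le_insert' _ _
    _ ≤ L * ‖z.1‖ + 1 * ‖z.1‖ := by
      rw [norm_mul]
      gcongr
      exacts [hT _ hz.1, hz.2]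
    _ = (L + 1) * ‖z.1‖ := by ring

theorem tendsto_fst (h : HasAsymptoticSlopes Z label T) :
    Tendsto Prod.fst (atInfinity Z) (cobounded 𝕜) := by
  obtain ⟨A, hA, hle⟩ := h.exists_norm_le
  refine (atTop_basis_Ioi.cobounded_of_norm).tendsto_right_iff.2 fun R _ => ?_
  filter_upwards [hle, eventually_lt_norm_atInfinity Z (A * R)] with z hz hR
  exact lt_of_mul_lt_mul_left (hR.trans_le hz) (by linarith)

theorem exists_label_eq (h : HasAsymptoticSlopes Z label T) :
    ∃ c > 0, ∀ᶠ p in atInfinity Z ×ˢ atInfinity Z,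
      ‖p.1 - p.2‖ ≤ c * ‖p.1‖ → label p.1 = label p.2 := by
  obtain ⟨θ, hθ, hsep⟩ := exists_pos_eq_of_norm_sub_lt T
  obtain ⟨L, hL, hT⟩ := exists_norm_le_of_mem T
  obtain ⟨A, hA, hle⟩ := h.exists_norm_le
  have hη : 0 < θ / 4 := by positivity
  set η := θ / 4 with hη_def
  have hslope := h η hη
  have hpos := eventually_lt_norm_atInfinity Z 0
  refine ⟨η / ((η + 1 + L) * A), by positivity, ?_⟩
  filter_upwards [(hslope.and (hle.and hpos)).prod_mk hslope] with p hp hpp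
  obtain ⟨⟨⟨hT1, h1⟩, hA1, hpos⟩, hT2, h2⟩ := hp
  have hz : 0 < ‖p.1.1‖ := pos_of_mul_pos_right (hpos.trans_le hA1) (by linarith)
  have hpp : ‖p.1 - p.2‖ ≤ η / (η + 1 + L) * ‖p.1.1‖ :=
    calc ‖p.1 - p.2‖ ≤ η / ((η + 1 + L) * A) * (A * ‖p.1.1‖) := hpp.trans (by gcongr)
      _ = η / (η + 1 + L) * ‖p.1.1‖ := by field_simp
  refine hsep _ hT1 _ hT2 (lt_of_mul_lt_mul_right ?_ hz.le)
  calc ‖label p.1 - label p.2‖ * ‖p.1.1‖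
      ≤ 2 * η * ‖p.1.1‖ + (η + 1 + L) * (η / (η + 1 + L) * ‖p.1.1‖) :=
        norm_slope_sub_mul_norm_le hη.le (hT _ hT2) h1 h2 hpp
    _ = 3 / 4 * (θ * ‖p.1.1‖) := by rw [hη_def]; field_simp; ring
    _ < θ * ‖p.1.1‖ := by linarith [mul_pos hθ hz]

theorem exists_norm_sub_le (h : HasAsymptoticSlopes Z label T) {ε : ℝ} (hε : 0 < ε) :
    ∃ κ > 0, ∀ᶠ p in atInfinity Z ×ˢ atInfinity Z, label p.1 = label p.2 →
      ‖p.1.1 - p.2.1‖ ≤ κ * ‖p.1.1‖ → ‖p.1 - p.2‖ ≤ ε * ‖p.1.1‖ := by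
  obtain ⟨L, hL, hT⟩ := exists_norm_le_of_mem T
  have hη : 0 < ε / 4 := by positivity
  set η := ε / 4 with hη_def
  have hslope := h η hη
  refine ⟨η / (η + 1 + L), by positivity, ?_⟩
  filter_upwards [hslope.prod_mk hslope] with p hp hlabel hpp
  obtain ⟨⟨hT1, h1⟩, -, h2⟩ := hp
  rw [← hlabel] at h2
  calc ‖p.1 - p.2‖ ≤ 2 * η * ‖p.1.1‖ + (η + 1 + L) * (η / (η + 1 + L) * ‖p.1.1‖) :=
        norm_sub_le_of_slope hη.le (hT _ hT1) h1 h2 hpp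
    _ = 3 / 4 * (ε * ‖p.1.1‖) := by rw [hη_def]; field_simp; ring
    _ ≤ ε * ‖p.1.1‖ := by linarith [mul_nonneg hε.le (norm_nonneg p.1.1)]

end HasAsymptoticSlopes

end Slopes

section Sheets

variable {Z : Set (ℂ × ℂ)} {d : ℕ} {label : ℂ × ℂ → ℂ} {T : Finset ℂ}

/-- Near infinity the first projection makes `Z` a `d`-sheeted cover of the plane: over a disc that
is small relative to the distance of its centre from the origin, `Z` splits into components each
mapped bijectively onto the disc. -/
structure IsSheetedAtInfinity (Z : Set (ℂ × ℂ)) (d : ℕ) : Prop where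
  encard_fiber : ∀ᶠ u in cobounded ℂ, {z ∈ Z | z.1 = u}.encard = d
  bijOn : ∀ᶠ a in cobounded ℂ, ∀ r ≤ 1 / 2 * ‖a‖, ∀ z ∈ Z, z.1 ∈ ball a r →
    BijOn Prod.fst (connectedComponentIn (Z ∩ Prod.fst ⁻¹' ball a r) z) (ball a r)

theorem eventually_forall_fst_near {p : ℂ × ℂ → Prop} (hp : ∀ᶠ z in atInfinity Z, p z) :
    ∀ᶠ a in cobounded ℂ, ∀ z ∈ Z, ‖a - z.1‖ ≤ 1 / 2 * ‖a‖ → p z := by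
  obtain ⟨R, hR⟩ := eventually_atInfinity.1 hp
  have hfar : ∀ᶠ a in cobounded ℂ, 2 * R < ‖a‖ :=
    atTop_basis_Ioi.cobounded_of_norm.mem_of_mem trivial
  filter_upwards [hfar] with a ha z hz hza
  refine hR z hz (lt_of_lt_of_le ?_ (norm_fst_le z))
  linarith [norm_le_norm_add_norm_sub' a z.1]

theorem eventually_forall_fst_eq {p : ℂ × ℂ → Prop} (hp : ∀ᶠ z in atInfinity Z, p z) :
    ∀ᶠ u in cobounded ℂ, ∀ z ∈ Z, z.1 = u → p z := by
  filter_upwards [eventually_forall_fst_near hp] with u hu z hz hzu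
  exact hu z hz (by rw [hzu, sub_self, norm_zero]; positivity)

namespace HasAsymptoticSlopes

variable (h : HasAsymptoticSlopes Z label T)

include h

theorem exists_label_eq_of_isPreconnected :
    ∃ s ∈ atInfinity Z, ∀ S ⊆ s, IsPreconnected S → ∀ z ∈ S, ∀ z' ∈ S, label z = label z' := by
  obtain ⟨c, hc, hlabel⟩ := h.exists_label_eq
  obtain ⟨s, hs, hlabel⟩ := eventually_prod_self_iff'.1 hlabel
  refine ⟨s ∩ {z | 0 < ‖z‖}, inter_mem hs (eventually_lt_norm_atInfinity Z 0),
    fun S hS hconn z hz z' hz' => ?_⟩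
  refine hconn.induction₂ (fun w w' => label w = label w') (fun w hw => ?_)
    (fun _ _ _ _ _ _ => Eq.trans) (fun _ _ _ _ => Eq.symm) hz hz'
  filter_upwards [self_mem_nhdsWithin, mem_nhdsWithin_of_mem_nhds
    (closedBall_mem_nhds w (mul_pos hc (hS hw).2))] with w' hw' hww'
  exact hlabel w (hS hw).1 w' (hS hw').1 (mem_closedBall_iff_norm'.1 hww')

theorem eventually_label_eq_on_sheet :
    ∀ᶠ a in cobounded ℂ, ∀ r ≤ 1 / 2 * ‖a‖, ∀ z ∈ Z, z.1 ∈ ball a r →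
      ∀ z' ∈ connectedComponentIn (Z ∩ Prod.fst ⁻¹' ball a r) z, label z' = label z := by
  obtain ⟨s, hs, hlabel⟩ := h.exists_label_eq_of_isPreconnected
  filter_upwards [eventually_forall_fst_near (p := (· ∈ s)) hs] with a ha r hr z hz hza z' hz'
  refine hlabel _ (fun w hw => ?_) isPreconnected_connectedComponentIn z' hz' z
    (mem_connectedComponentIn ⟨hz, hza⟩)
  obtain ⟨hwZ, hwa⟩ := connectedComponentIn_subset _ _ hw
  exact ha w hwZ ((mem_ball_iff_norm'.1 hwa).le.trans hr)

end HasAsymptoticSlopes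

/-- The points of `Z` over `u` which lie on a sheet of slope `t`. -/
def labelFiber (Z : Set (ℂ × ℂ)) (label : ℂ × ℂ → ℂ) (t u : ℂ) : Set (ℂ × ℂ) :=
  {z ∈ Z | z.1 = u ∧ label z = t}

namespace IsSheetedAtInfinity

theorem eventually_encard_labelFiber_le (hZ : IsSheetedAtInfinity Z d)
    (h : HasAsymptoticSlopes Z label T) :
    ∀ᶠ a in cobounded ℂ, ∀ u ∈ ball a (1 / 2 * ‖a‖), ∀ u' ∈ ball a (1 / 2 * ‖a‖), ∀ t,
      (labelFiber Z label t u).encard ≤ (labelFiber Z label t u').encard := by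
  filter_upwards [hZ.bijOn, h.eventually_label_eq_on_sheet] with a hbij hlabel u hu u' hu' t
  set r := 1 / 2 * ‖a‖
  have hmem : ∀ z ∈ labelFiber Z label t u, z.1 ∈ ball a r := fun z hz => hz.2.1 ▸ hu
  have hlift : ∀ z ∈ labelFiber Z label t u,
      ∃ z' ∈ connectedComponentIn (Z ∩ Prod.fst ⁻¹' ball a r) z, z'.1 = u' :=
    fun z hz => (hbij r le_rfl z hz.1 (hmem z hz)).surjOn hu'
  choose! σ hσ hσu using hlift
  refine encard_le_encard_of_injOn (f := σ) (fun z hz => ?_) fun z hz w hw hzw => ?_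
  · exact ⟨(connectedComponentIn_subset _ _ (hσ z hz)).1, hσu z hz,
      (hlabel r le_rfl z hz.1 (hmem z hz) _ (hσ z hz)).trans hz.2.2⟩
  · refine (hbij r le_rfl z hz.1 (hmem z hz)).injOn (mem_connectedComponentIn ⟨hz.1, hmem z hz⟩) ?_
      (hz.2.1.trans hw.2.1.symm)
    rw [connectedComponentIn_eq (hσ z hz), hzw, ← connectedComponentIn_eq (hσ w hw)]
    exact mem_connectedComponentIn ⟨hw.1, hmem w hw⟩

theorem finite_labelFiber {u : ℂ} (hu : {z ∈ Z | z.1 = u}.encard = d) (t : ℂ) :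
    (labelFiber Z label t u).Finite :=
  (finite_of_encard_eq_coe hu).subset fun _ hz => ⟨hz.1, hz.2.1⟩

theorem exists_encard_labelFiber (hZ : IsSheetedAtInfinity Z d)
    (h : HasAsymptoticSlopes Z label T) :
    ∃ m : ℂ → ℕ, ∀ᶠ u in cobounded ℂ, ∀ t, (labelFiber Z label t u).encard = m t := by
  have hpair : ∀ᶠ p in cobounded ℂ ×ˢ cobounded ℂ, ‖p.1 - p.2‖ ≤ 1 / 4 * ‖p.1‖ →
      ∀ t, (labelFiber Z label t p.1).encard = (labelFiber Z label t p.2).encard := by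
    filter_upwards [((hZ.eventually_encard_labelFiber_le h).and
      (eventually_ne_cobounded 0)).prod_inl _] with p ⟨hle, h0⟩ hp t
    have h0 : 0 < ‖p.1‖ := norm_pos_iff.2 h0
    have h1 : p.1 ∈ ball p.1 (1 / 2 * ‖p.1‖) := mem_ball_self (by positivity)
    have h2 : p.2 ∈ ball p.1 (1 / 2 * ‖p.1‖) := mem_ball_iff_norm'.2 (by linarith)
    exact (hle _ h1 _ h2 t).antisymm (hle _ h2 _ h1 t)
  have hconst := eventually_cobounded_of_norm_sub_le (κ := 1 / 4)
    (P := fun u v => ∀ t, (labelFiber Z label t u).encard = (labelFiber Z label t v).encard)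
    (by rw [Complex.rank_real_complex]; exact Cardinal.one_lt_two)
    (by norm_num) (fun _ _ h t => (h t).symm) (fun _ _ _ h h' t => (h t).trans (h' t)) hpair
  obtain ⟨s, hs, hconst⟩ := eventually_prod_self_iff'.1 hconst
  obtain ⟨u, hus, hu⟩ := (Filter.Eventually.and hs hZ.encard_fiber).exists
  refine ⟨fun t => (labelFiber Z label t u).ncard, ?_⟩
  filter_upwards [hs] with u' hu' t
  rw [hconst u' hu' u hus t, (finite_labelFiber hu t).cast_ncard_eq]

theorem sum_eq (hZ : IsSheetedAtInfinity Z d) (h : HasAsymptoticSlopes Z label T) {m : ℂ → ℕ}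
    (hm : ∀ᶠ u in cobounded ℂ, ∀ t, (labelFiber Z label t u).encard = m t) :
    ∑ t ∈ T, m t = d := by
  classical
  have hlabel := eventually_forall_fst_eq ((h 1 one_pos).mono fun _ hz => hz.1)
  obtain ⟨u, hu, hlabel, hd⟩ := (hm.and (hlabel.and hZ.encard_fiber)).exists
  have hfin := finite_of_encard_eq_coe hd
  have hcard : hfin.toFinset.card = d := by
    rw [← ENat.natCast_inj, ← hd, hfin.encard_eq_coe_toFinset_card]
  rw [← hcard, Finset.card_eq_sum_card_fiberwise (f := label) (t := T)
    fun z hz => by rw [Finset.mem_coe, hfin.mem_toFinset] at hz; exact hlabel z hz.1 hz.2]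
  refine Finset.sum_congr rfl fun t _ => ?_
  rw [← ENat.natCast_inj, ← hu t, ← encard_coe_eq_coe_finsetCard]
  congr 1
  ext z
  simp [labelFiber, and_assoc]

end IsSheetedAtInfinity

namespace HasAsymptoticSlopes

theorem exists_forall_norm_sub_le_of_fst (h : HasAsymptoticSlopes Z label T) {ε : ℝ}
    (hε : 0 < ε) :
    ∃ κ > 0, ∀ᶠ z in atInfinity Z, ∀ w ∈ Z, label z = label w → ‖z.1 - w.1‖ ≤ κ * ‖z.1‖ →
      ‖z - w‖ ≤ ε * ‖z‖ := by
  obtain ⟨κ, hκ, hclose⟩ := h.exists_norm_sub_le hε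
  obtain ⟨s, hs, hclose⟩ := eventually_prod_self_iff'.1 hclose
  refine ⟨min κ (1 / 2), by positivity, ?_⟩
  filter_upwards [hs, h.tendsto_fst.eventually (eventually_forall_fst_near (p := (· ∈ s)) hs)]
    with z hz hnear w hw hzw hle
  have hws : w ∈ s := hnear w hw (hle.trans (by gcongr; exact min_le_right _ _))
  exact (hclose z hz w hws hzw (hle.trans (by gcongr; exact min_le_left _ _))).trans
    (by gcongr; exact norm_fst_le z)

theorem exists_label_eq_of_norm_sub_le (h : HasAsymptoticSlopes Z label T) :
    ∃ c > 0, ∀ᶠ z in atInfinity Z, ∀ w ∈ Z, ‖w - z‖ ≤ c * ‖z‖ → label w = label z := by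
  obtain ⟨c, hc, hlabel⟩ := h.exists_label_eq
  obtain ⟨s, hs, hlabel⟩ := eventually_prod_self_iff'.1 hlabel
  refine ⟨min c (1 / 2), by positivity, ?_⟩
  filter_upwards [hs, eventually_forall_norm_sub_le (p := (· ∈ s)) hs] with z hz hnear w hw hle
  have hws : w ∈ s := hnear w hw (hle.trans (by gcongr; exact min_le_right _ _))
  rw [norm_sub_rev] at hle
  exact (hlabel z hz w hws (hle.trans (by gcongr; exact min_le_left _ _))).symm

theorem exists_sheet_subset_ball (h : HasAsymptoticSlopes Z label T) {δ : ℝ} (hδ : 0 < δ) :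
    ∃ ρ > 0, ρ ≤ 1 / 2 ∧ ∀ᶠ z in atInfinity Z, ∀ w ∈ Z, w.1 ∈ ball z.1 (ρ * ‖z.1‖) →
      label w = label z → ∀ v ∈ connectedComponentIn (Z ∩ Prod.fst ⁻¹' ball z.1 (ρ * ‖z.1‖)) w,
        label v = label z ∧ v ∈ Z ∩ ball z (δ * ‖z‖) := by
  obtain ⟨κ, hκ, hclose⟩ := h.exists_forall_norm_sub_le_of_fst (half_pos hδ)
  refine ⟨min κ (1 / 2), by positivity, min_le_right _ _, ?_⟩
  filter_upwards [hclose, h.tendsto_fst.eventually h.eventually_label_eq_on_sheet,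
    eventually_lt_norm_atInfinity Z 0] with z hclose hsheet hz0 w hwZ hw hwz v hv
  have hlabel : label v = label z :=
    (hsheet _ (by gcongr; exact min_le_right _ _) w hwZ hw v hv).trans hwz
  obtain ⟨hvZ, hvz⟩ := connectedComponentIn_subset _ _ hv
  have hvz : ‖z.1 - v.1‖ ≤ κ * ‖z.1‖ :=
    (mem_ball_iff_norm'.1 hvz).le.trans (by gcongr; exact min_le_left _ _)
  refine ⟨hlabel, hvZ, mem_ball_iff_norm'.2 ((hclose v hvZ hlabel.symm hvz).trans_lt ?_)⟩
  gcongr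
  exact half_lt_self hδ

end HasAsymptoticSlopes

namespace IsSheetedAtInfinity

variable {m : ℂ → ℕ} (hZ : IsSheetedAtInfinity Z d) (h : HasAsymptoticSlopes Z label T)
  (hm : ∀ᶠ u in cobounded ℂ, ∀ t, (labelFiber Z label t u).encard = m t)

include hm

theorem frequently_label {t : ℂ} (ht : m t ≠ 0) : ∃ᶠ z in atInfinity Z, label z = t := by
  intro hne
  obtain ⟨u, hu, hne⟩ := (hm.and (eventually_forall_fst_eq hne)).exists
  obtain ⟨z, hzZ, hzu, hzt⟩ : (labelFiber Z label t u).Nonempty := by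
    rw [← encard_ne_zero, hu t]
    exact_mod_cast ht
  exact hne z hzZ hzu hzt

include h

theorem eventually_multiplicity_ne_zero : ∀ᶠ z in atInfinity Z, m (label z) ≠ 0 := by
  filter_upwards [eventually_mem_atInfinity Z, h.tendsto_fst.eventually hm] with z hz hm
  rw [← Nat.cast_ne_zero (R := ℕ∞), ← hm, encard_ne_zero]
  exact ⟨z, hz, rfl, rfl⟩

theorem eventually_exists_labelFiber :
    ∀ᶠ z in atInfinity Z, ∃ V : Finset (ℂ × ℂ), V.card = m (label z) ∧
      ∀ v, v ∈ V ↔ v ∈ Z ∧ v.1 = z.1 ∧ label v = label z := by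
  filter_upwards [h.tendsto_fst.eventually hm] with z hz
  have hfin := finite_of_encard_eq_coe (hz (label z))
  refine ⟨hfin.toFinset, ?_, fun v => hfin.mem_toFinset⟩
  rw [← ENat.natCast_inj, ← hz, hfin.encard_eq_coe_toFinset_card]

theorem eventually_eqvGen {ε : ℝ} (hε : 0 < ε) {s : Set (ℂ × ℂ)} (hs : s ∈ atInfinity Z) :
    ∀ᶠ p in atInfinity Z ×ˢ atInfinity Z, label p.1 = label p.2 →
      Relation.EqvGen (fun w w' => w ∈ s ∧ w' ∈ s ∧ ‖w - w'‖ ≤ ε * ‖w‖) p.1 p.2 := by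
  obtain ⟨κ, hκ, hclose⟩ := h.exists_forall_norm_sub_le_of_fst hε
  have hfar := hm.and (eventually_forall_fst_eq (Filter.Eventually.and hs hclose))
  have hchain := eventually_cobounded_of_norm_sub_le
    (by rw [Complex.rank_real_complex]; exact Cardinal.one_lt_two)
    (P := fun u u' => ∀ t, m t ≠ 0 →
      (labelFiber Z label t u).Nonempty ∧ (labelFiber Z label t u').Nonempty ∧
      ∀ z ∈ labelFiber Z label t u, ∀ z' ∈ labelFiber Z label t u',
        Relation.EqvGen (fun w w' => w ∈ s ∧ w' ∈ s ∧ ‖w - w'‖ ≤ ε * ‖w‖) z z') hκ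
    (fun u v huv t ht => ⟨(huv t ht).2.1, (huv t ht).1, fun z hz z' hz' =>
      ((huv t ht).2.2 z' hz' z hz).symm⟩)
    (fun u v w huv hvw t ht => ⟨(huv t ht).1, (hvw t ht).2.1, fun z hz z' hz' =>
      (huv t ht).2.1.elim fun y hy => ((huv t ht).2.2 z hz y hy).trans _ _ _
        ((hvw t ht).2.2 y hy z' hz')⟩) ?_
  · filter_upwards [(h.tendsto_fst.prodMap h.tendsto_fst).eventually hchain,
      ((eventually_mem_atInfinity Z).and (eventually_multiplicity_ne_zero h hm)).prod_mk
        (eventually_mem_atInfinity Z)] with p hp ⟨⟨h1, hm1⟩, h2⟩ heq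
    exact (hp _ hm1).2.2 p.1 ⟨h1, rfl, rfl⟩ p.2 ⟨h2, rfl, heq.symm⟩
  · filter_upwards [hfar.prod_mk hfar] with p ⟨⟨hm1, h1⟩, hm2, h2⟩ hp t ht
    refine ⟨by simpa [← encard_ne_zero, hm1], by simpa [← encard_ne_zero, hm2], ?_⟩
    rintro z ⟨hzZ, hz, rfl⟩ z' ⟨hzZ', hz', hlabel⟩
    refine .rel _ _ ⟨(h1 z hzZ hz).1, (h2 z' hzZ' hz').1,
      (h1 z hzZ hz).2 z' hzZ' hlabel.symm ?_⟩
    rwa [hz, hz']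

include hZ

theorem exists_sheets_ge :
    ∃ c > 0, ∀ ε > 0, ∀ᶠ z in atInfinity Z, ∃ V : Finset (ℂ × ℂ), V.card = m (label z) ∧
      ↑V ⊆ Z ∩ closedBall z (ε * ‖z‖) ∧
      ∀ v ∈ V, ∀ v' ∈ V, v' ∈ connectedComponentIn (Z ∩ ball z (c * ‖z‖)) v → v = v' := by
  obtain ⟨A, hA, hle⟩ := h.exists_norm_le
  refine ⟨1 / (2 * A), by positivity, fun ε hε => ?_⟩
  obtain ⟨κ, hκ, hclose⟩ := h.exists_forall_norm_sub_le_of_fst hε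
  filter_upwards [hle, hclose, eventually_exists_labelFiber h hm,
    h.tendsto_fst.eventually hZ.bijOn, h.tendsto_fst.eventually (eventually_ne_cobounded 0)]
    with z hA hclose ⟨V, hcard, hV⟩ hbij hz0
  have hdisc : z.1 ∈ ball z.1 (1 / 2 * ‖z.1‖) :=
    mem_ball_self (mul_pos one_half_pos (norm_pos_iff.2 hz0))
  refine ⟨V, hcard, fun v hv => ?_, fun v hv v' hv' hvv' => ?_⟩
  · obtain ⟨hvZ, hvz, hlabel⟩ := (hV v).1 hv
    exact ⟨hvZ, mem_closedBall_iff_norm'.2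
      (hclose v hvZ hlabel.symm (by rw [hvz, sub_self, norm_zero]; positivity))⟩
  · obtain ⟨hvZ, hvz, -⟩ := (hV v).1 hv
    have hsub : Z ∩ ball z (1 / (2 * A) * ‖z‖) ⊆ Z ∩ Prod.fst ⁻¹' ball z.1 (1 / 2 * ‖z.1‖) := by
      refine inter_subset_inter_right Z fun w hw => mem_ball_iff_norm.2 ?_
      calc ‖w.1 - z.1‖ ≤ ‖w - z‖ := norm_fst_le (w - z)
        _ < 1 / (2 * A) * ‖z‖ := mem_ball_iff_norm.1 hw
        _ ≤ 1 / (2 * A) * (A * ‖z.1‖) := by gcongr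
        _ = 1 / 2 * ‖z.1‖ := by field_simp
    exact (hbij _ le_rfl v hvZ (hvz ▸ hdisc)).injOn
      (mem_connectedComponentIn ⟨hvZ, hvz ▸ hdisc⟩) (connectedComponentIn_mono v hsub hvv')
      (hvz.trans ((hV v').1 hv').2.1.symm)

theorem exists_sheets_le {δ : ℝ} (hδ : 0 < δ) :
    ∃ ε > 0, ∀ᶠ z in atInfinity Z, ∃ V : Finset (ℂ × ℂ), V.card = m (label z) ∧
      ∀ w ∈ Z ∩ closedBall z (ε * ‖z‖),
        ∃ v ∈ V, v ∈ connectedComponentIn (Z ∩ ball z (δ * ‖z‖)) w := by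
  obtain ⟨A, hA, hle⟩ := h.exists_norm_le
  obtain ⟨ρ, hρ, hρ2, hsheet⟩ := h.exists_sheet_subset_ball hδ
  obtain ⟨c, hc, hsep⟩ := h.exists_label_eq_of_norm_sub_le
  refine ⟨min c (ρ / (2 * A)), by positivity, ?_⟩
  filter_upwards [hle, hsheet, hsep, eventually_exists_labelFiber h hm,
    h.tendsto_fst.eventually hZ.bijOn, h.tendsto_fst.eventually (eventually_ne_cobounded 0)]
    with z hA hsheet hsep ⟨V, hcard, hV⟩ hbij hz0
  refine ⟨V, hcard, fun w ⟨hwZ, hwz⟩ => ?_⟩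
  have : 0 < ‖z.1‖ := norm_pos_iff.2 hz0
  have hwz := mem_closedBall_iff_norm.1 hwz
  have hw : w.1 ∈ ball z.1 (ρ * ‖z.1‖) := mem_ball_iff_norm.2 <|
    calc ‖w.1 - z.1‖ ≤ min c (ρ / (2 * A)) * ‖z‖ := (norm_fst_le (w - z)).trans hwz
      _ ≤ ρ / (2 * A) * (A * ‖z.1‖) := by gcongr; exact min_le_right _ _
      _ = ρ * ‖z.1‖ / 2 := by field_simp
      _ < ρ * ‖z.1‖ := half_lt_self (by positivity)
  have hlabel : label w = label z := hsep w hwZ (hwz.trans (by gcongr; exact min_le_left _ _))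
  have hsheet := hsheet w hwZ hw hlabel
  obtain ⟨v, hv, hvz⟩ := (hbij _ (by gcongr) w hwZ hw).surjOn (mem_ball_self (by positivity))
  refine ⟨v, (hV v).2 ⟨(hsheet v hv).2.1, hvz, (hsheet v hv).1⟩, ?_⟩
  have hwmem : w ∈ Z ∩ Prod.fst ⁻¹' ball z.1 (ρ * ‖z.1‖) := ⟨hwZ, hw⟩
  exact isPreconnected_connectedComponentIn.subset_connectedComponentIn
    (mem_connectedComponentIn hwmem) (fun v hv => (hsheet v hv).2) hv

omit hm

theorem exists_hasConicalEnds : ∃ T' m, HasConicalEnds Z label T' m ∧ ∑ t ∈ T', m t = d := by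
  classical
  obtain ⟨m, hm⟩ := hZ.exists_encard_labelFiber h
  refine ⟨{t ∈ T | m t ≠ 0}, m, ⟨?_, fun t ht => ?_, h.exists_label_eq, fun ε hε s hs =>
    eventually_eqvGen h hm hε hs, hZ.exists_sheets_ge h hm, fun δ hδ =>
    hZ.exists_sheets_le h hm hδ⟩, ?_⟩
  · filter_upwards [h 1 one_pos, eventually_multiplicity_ne_zero h hm] with z hz hmz
    exact Finset.mem_filter.2 ⟨hz.1, hmz⟩
  · exact frequently_label hm (Finset.mem_filter.1 ht).2
  · rw [Finset.sum_filter_ne_zero, hZ.sum_eq h hm]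

end IsSheetedAtInfinity

end Sheets

section UniqueFactorization

variable {α : Type*} [CommMonoidWithZero α] [UniqueFactorizationMonoid α]

theorem exists_eq_mul_and_isUnit_of_forall_dvd {S : Finset α} (hS : ∃ p ∈ S, p ≠ 0) :
    ∃ (q : α) (g : α → α), q ≠ 0 ∧ (∀ p ∈ S, p = q * g p) ∧
      ∀ d, (∀ p ∈ S, d ∣ g p) → IsUnit d := by
  let := UniqueFactorizationMonoid.strongNormalizationMonoid (α := α)
  let := UniqueFactorizationMonoid.toNormalizedGCDMonoid α
  obtain ⟨p, hpS, hp⟩ := hS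
  obtain ⟨g, hg, hgcd⟩ := S.extract_gcd id ⟨p, hpS⟩
  exact ⟨S.gcd id, g, left_ne_zero_of_mul ((hg p hpS).symm.trans_ne hp), hg,
    fun d hd => isUnit_of_dvd_one (hgcd ▸ Finset.dvd_gcd hd)⟩

theorem exists_squarefree_dvd_and_dvd_pow {a : α} (ha : a ≠ 0) :
    ∃ q, Squarefree q ∧ q ∣ a ∧ ∃ n, a ∣ q ^ n := by
  let := UniqueFactorizationMonoid.strongNormalizationMonoid (α := α)
  exact ⟨_, UniqueFactorizationMonoid.squarefree_radical,
    UniqueFactorizationMonoid.radical_dvd_self,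
    UniqueFactorizationMonoid.exists_dvd_radical_self_pow ha⟩

theorem isMaximal_of_forall_le_span_singleton {R : Type*} [CommRing R] [IsDomain R]
    [UniqueFactorizationMonoid R] (hR : ringKrullDim R = 2) {I P : Ideal R}
    (hI : ∀ d, I ≤ Ideal.span {d} → IsUnit d) [hP : P.IsPrime] (hIP : I ≤ P) :
    P.IsMaximal := by
  have : FiniteRingKrullDim R := finiteRingKrullDim_iff_ne_bot_and_top.2 (by rw [hR]; decide)
  have not_principal : ∀ d, P ≠ Ideal.span {d} := fun d hd =>
    hP.ne_top (hd.trans (Ideal.span_singleton_eq_top.2 (hI d (hd ▸ hIP))))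
  have height_le : P.height ≤ 2 := by
    have := (P.height_le_ringKrullDim_of_ne_top hP.ne_top).trans_eq hR
    exact WithBot.coe_le_coe.1 this
  have height_ne_zero : P.height ≠ 0 := fun h =>
    not_principal 0 (by simpa using Ideal.height_eq_zero_iff_eq_bot.1 h)
  have height_ne_one : P.height ≠ 1 := fun h => by
    have := UniqueFactorizationMonoid.isPrincipal_of_height_eq_one h
    exact not_principal _ (Submodule.IsPrincipal.span_singleton_generator P).symm
  have height_eq : P.height = 2 := by
    have one_lt : 1 < P.height :=
      lt_of_le_of_ne (Order.one_le_iff_ne_zero.2 height_ne_zero) height_ne_one.symm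
    exact height_le.antisymm (by simpa [one_add_one_eq_two] using Order.add_one_le_of_lt one_lt)
  exact Ideal.isMaximal_of_height_eq_ringKrullDim (by rw [hR, height_eq]; rfl)

end UniqueFactorization

section ZeroLocus

open MvPolynomial

variable {K : Type*} [Field K]

theorem injective_vanishingIdeal_singleton {σ : Type*} :
    Function.Injective fun x : σ → K => vanishingIdeal K {x} := by
  intro x y hxy
  funext i
  have hmem : X i - C (x i) ∈ vanishingIdeal K {x} := by simp
  rw [show vanishingIdeal K {x} = vanishingIdeal K {y} from hxy] at hmem
  exact (by simpa [sub_eq_zero] using hmem : y i = x i).symm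

theorem finite_zeroLocus_of_forall_le_span_singleton {I : Ideal (MvPolynomial (Fin 2) K)}
    (hI : ∀ d, I ≤ Ideal.span {d} → IsUnit d) : (zeroLocus K I).Finite := by
  have hdim : ringKrullDim (MvPolynomial (Fin 2) K) = 2 := by
    rw [ringKrullDim_of_isNoetherianRing, ringKrullDim_eq_zero_of_field]
    simp
  refine Set.Finite.of_finite_image
    ((I.finite_minimalPrimes_of_isNoetherianRing).subset ?_)
    injective_vanishingIdeal_singleton.injOn
  rintro _ ⟨x, hx, rfl⟩
  have hle : I ≤ vanishingIdeal K {x} :=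
    le_zeroLocus_iff_le_vanishingIdeal.1 (Set.singleton_subset_iff.2 hx)
  obtain ⟨P, hP, hPx⟩ := Ideal.exists_minimalPrimes_le hle
  have := hP.1.1
  have hmax := isMaximal_of_forall_le_span_singleton hdim hI hP.1.2
  have hPeq : P = vanishingIdeal K {x} := hmax.eq_of_le (Ideal.IsPrime.ne_top inferInstance) hPx
  exact Set.mem_of_eq_of_mem hPeq.symm hP

theorem finite_setOf_forall_eval_eq_zero {S : Set (MvPolynomial (Fin 2) K)}
    (hS : ∀ d, (∀ p ∈ S, d ∣ p) → IsUnit d) : {x | ∀ p ∈ S, eval x p = 0}.Finite := by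
  refine (finite_zeroLocus_of_forall_le_span_singleton (I := Ideal.span S) fun d hd =>
    hS d fun p hp => Ideal.mem_span_singleton.1 (hd (Ideal.subset_span hp))).subset fun x hx => ?_
  rw [zeroLocus_span]
  simpa [aeval_eq_eval] using hx

theorem finite_setOf_eval_eq_zero_of_isRelPrime {p q : MvPolynomial (Fin 2) K}
    (h : IsRelPrime p q) : {x | eval x p = 0 ∧ eval x q = 0}.Finite := by
  simpa using finite_setOf_forall_eval_eq_zero (S := {p, q}) fun d hd =>
    h (hd p (by simp)) (hd q (by simp))

theorem dvd_of_squarefree_of_forall_eval_eq_zero [IsAlgClosed K] {σ : Type*} [Finite σ]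
    {p q : MvPolynomial σ K} (hq : Squarefree q) (h : ∀ x, eval x q = 0 → eval x p = 0) :
    q ∣ p := by
  rw [← Ideal.mem_span_singleton,
    ← (isRadical_iff_span_singleton.1 hq.isRadical).radical,
    ← vanishingIdeal_zeroLocus_eq_radical (K := K)]
  exact fun x hx => h x (hx q (Ideal.mem_span_singleton_self q))

end ZeroLocus

section PlaneCurve

open MvPolynomial

theorem IsIrreducibleAlgebraicCurve.subset_setOf_eval_eq_zero {k : ℕ}
    {C : Set (EuclideanSpace ℂ (Fin k))} (hC : IsIrreducibleAlgebraicCurve C)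
    {p : MvPolynomial (Fin k) ℂ} (hp : {x ∈ C | eval (fun i => x i) p = 0}.Infinite) :
    C ⊆ {x | eval (fun i => x i) p = 0} := by
  classical
  obtain ⟨⟨S, rfl⟩, -, hfin⟩ := hC
  by_contra hnot
  refine hp (hfin _ ⟨insert p S, ?_⟩ ⟨Set.sep_subset _ _, fun h => hnot fun x hx => (h hx).2⟩)
  ext x
  simp [and_comm]

theorem IsIrreducibleAlgebraicCurve.exists_ne_zero_of_mem {C : Set (EuclideanSpace ℂ (Fin 2))}
    (hC : IsIrreducibleAlgebraicCurve C) {S : Finset (MvPolynomial (Fin 2) ℂ)}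
    (hS : C = {x | ∀ p ∈ S, eval (fun i => x i) p = 0}) : ∃ p ∈ S, p ≠ 0 := by
  by_contra! hzero
  have hmem : ∀ x, x ∈ C := fun x => by
    rw [hS]
    exact fun p hp => by rw [hzero p hp, map_zero]
  have hinj : Function.Injective fun t : ℂ => !₂[0, t] := fun s t h => by
    simpa using congrArg (fun x => x 1) h
  have hinf : {x ∈ C | eval (fun i => x i) (X 0 : MvPolynomial (Fin 2) ℂ) = 0}.Infinite :=
    (Set.infinite_range_of_injective hinj).mono (by rintro _ ⟨t, rfl⟩; simp [hmem])
  simpa using hC.subset_setOf_eval_eq_zero hinf (hmem !₂[1, 0])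

theorem IsIrreducibleAlgebraicCurve.exists_eq_setOf_eval_eq_zero
    {C : Set (EuclideanSpace ℂ (Fin 2))} (hC : IsIrreducibleAlgebraicCurve C) :
    ∃ p : MvPolynomial (Fin 2) ℂ, p ≠ 0 ∧ C = {x | eval (fun i => x i) p = 0} := by
  obtain ⟨S, hS⟩ := hC.1
  obtain ⟨q, g, hq, hqg, hunit⟩ :=
    exists_eq_mul_and_isUnit_of_forall_dvd (hC.exists_ne_zero_of_mem hS)
  have hfin : {x : EuclideanSpace ℂ (Fin 2) | ∀ p ∈ S, eval (fun i => x i) (g p) = 0}.Finite := by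
    have := finite_setOf_forall_eval_eq_zero (S := g '' S) (by simpa using hunit)
    simpa using this.preimage (WithLp.ofLp_injective 2).injOn
  have hinf : {x ∈ C | eval (fun i => x i) q = 0}.Infinite := by
    refine (hC.2.1.sdiff hfin).mono ?_
    rintro x ⟨hxC, hxg⟩
    refine ⟨hxC, by_contra fun hxq => hxg fun p hp => ?_⟩
    rw [hS] at hxC
    have := hxC p hp
    rw [hqg p hp, map_mul] at this
    exact (mul_eq_zero.1 this).resolve_left hxq
  refine ⟨q, hq, (hC.subset_setOf_eval_eq_zero hinf).antisymm fun x hx => ?_⟩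
  rw [hS]
  intro p hp
  rw [hqg p hp, map_mul, show eval (fun i => x i) q = 0 from hx, zero_mul]

theorem IsAlgebraicCurve.exists_eq_setOf_eval_eq_zero {X : Set (EuclideanSpace ℂ (Fin 2))}
    (hX : IsAlgebraicCurve X) :
    ∃ p : MvPolynomial (Fin 2) ℂ, p ≠ 0 ∧ X = {x | eval (fun i => x i) p = 0} := by
  obtain ⟨F, hF, rfl⟩ := hX
  choose! p hp using fun C (hC : C ∈ F) => (hF C hC).exists_eq_setOf_eval_eq_zero
  refine ⟨∏ C ∈ F, p C, Finset.prod_ne_zero_iff.2 fun C hC => (hp C hC).1, ?_⟩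
  ext x
  simp only [Set.mem_iUnion, Set.mem_ofPred_eq, map_prod, Finset.prod_eq_zero_iff, exists_prop]
  refine exists_congr fun C => and_congr_right fun hC => ?_
  nth_rw 1 [(hp C hC).2]
  rfl

theorem curveDegree_setOf_eval_eq_zero {q : MvPolynomial (Fin 2) ℂ} (hq : Squarefree q) :
    curveDegree {x | eval (fun i => x i) q = 0} = q.totalDegree := by
  refine IsLeast.csInf_eq ⟨⟨q, hq.ne_zero, rfl, fun x hx => hx⟩, ?_⟩
  rintro _ ⟨p, hp, rfl, hpX⟩
  obtain ⟨r, rfl⟩ := dvd_of_squarefree_of_forall_eval_eq_zero hq fun x hx =>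
    hpX (WithLp.toLp 2 x) hx
  rw [totalDegree_mul_of_isDomain hq.ne_zero (right_ne_zero_of_mul hp)]
  exact Nat.le_add_right _ _

theorem IsAlgebraicCurve.exists_squarefree {X : Set (EuclideanSpace ℂ (Fin 2))}
    (hX : IsAlgebraicCurve X) : ∃ q : MvPolynomial (Fin 2) ℂ,
      Squarefree q ∧ X = {x | eval (fun i => x i) q = 0} ∧ curveDegree X = q.totalDegree := by
  obtain ⟨p, hp, rfl⟩ := hX.exists_eq_setOf_eval_eq_zero
  obtain ⟨q, hq, ⟨r, rfl⟩, n, s, hs⟩ := exists_squarefree_dvd_and_dvd_pow hp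
  have heq : {x : EuclideanSpace ℂ (Fin 2) | eval (fun i => x i) (q * r) = 0} =
      {x | eval (fun i => x i) q = 0} := by
    ext x
    refine ⟨fun hx => ?_, fun hx => ?_⟩
    · have := congrArg (eval fun i => x i) hs
      rw [map_mul, show eval (fun i => x i) (q * r) = 0 from hx, zero_mul, map_pow] at this
      exact eq_zero_of_pow_eq_zero this
    · exact (map_mul _ _ _).trans (by rw [show eval (fun i => x i) q = 0 from hx, zero_mul])
  exact ⟨q, hq, heq, heq ▸ curveDegree_setOf_eval_eq_zero hq⟩

end PlaneCurve

section Homogeneous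

open MvPolynomial

variable {σ R : Type*} [CommSemiring R]

theorem isHomogeneous_eval_smul {P : MvPolynomial σ R} {n : ℕ} (hP : P.IsHomogeneous n) (c : R)
    (x : σ → R) : eval (c • x) P = c ^ n * eval x P := by
  simp only [eval_eq, Finset.mul_sum]
  refine Finset.sum_congr rfl fun m hm => ?_
  rw [hP.degree_eq_sum_deg_support hm, ← Finset.prod_pow_eq_pow_sum]
  simp only [Pi.smul_apply, smul_eq_mul, mul_pow, Finset.prod_mul_distrib]
  ring

theorem homogeneousComponent_aeval {g : σ → MvPolynomial σ R} (hg : ∀ i, (g i).IsHomogeneous 1)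
    (n : ℕ) (P : MvPolynomial σ R) :
    homogeneousComponent n (aeval g P) = aeval g (homogeneousComponent n P) := by
  induction P using MvPolynomial.induction_on' with
  | monomial m a =>
    have hm : (monomial m a).IsHomogeneous m.degree := isHomogeneous_monomial a rfl
    have hgm : (aeval g (monomial m a)).IsHomogeneous m.degree := one_mul m.degree ▸ hm.aeval g hg
    rw [homogeneousComponent_of_mem hm, homogeneousComponent_of_mem hgm]
    split_ifs <;> simp
  | add p q hp hq => simp only [map_add, hp, hq]

theorem totalDegree_aeval_le {g : σ → MvPolynomial σ R} (hg : ∀ i, (g i).IsHomogeneous 1)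
    (P : MvPolynomial σ R) : (aeval g P).totalDegree ≤ P.totalDegree := by
  conv_lhs => rw [← sum_homogeneousComponent P, map_sum]
  refine totalDegree_finsetSum_le fun i hi => ?_
  have := ((homogeneousComponent_isHomogeneous i P).aeval g hg).totalDegree_le
  have := Finset.mem_range.1 hi
  omega

theorem homogeneousComponent_totalDegree_ne_zero {P : MvPolynomial σ R} (hP : P ≠ 0) :
    homogeneousComponent P.totalDegree P ≠ 0 := by
  obtain ⟨m, hm, hmP⟩ := Finset.exists_mem_eq_sup P.support (support_nonempty.2 hP) Finsupp.degree
  refine ne_zero_iff.2 ⟨m, ?_⟩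
  have hdeg : m.degree = P.totalDegree := hmP.symm
  rw [coeff_homogeneousComponent, if_pos hdeg]
  exact mem_support_iff.1 hm

theorem exists_eval_ne_zero_of_isHomogeneous {K : Type*} [Field K] [Infinite K]
    {P : MvPolynomial (Fin 2) K} {n : ℕ} (hP : P.IsHomogeneous n) (hne : P ≠ 0) :
    ∃ c, eval ![c, 1] P ≠ 0 := by
  have hmul : P * X 1 ≠ 0 := mul_ne_zero hne (X_ne_zero 1)
  obtain ⟨x, hx⟩ : ∃ x, eval x (P * X 1) ≠ 0 := by
    by_contra! h
    exact hmul (MvPolynomial.funext fun x => by rw [h, map_zero])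
  rw [map_mul, eval_X] at hx
  have hx1 : x 1 ≠ 0 := right_ne_zero_of_mul hx
  have hsmul : x 1 • ![x 0 / x 1, 1] = x := by
    ext i
    fin_cases i <;> simp [mul_div_cancel₀, hx1]
  refine ⟨x 0 / x 1, fun h => left_ne_zero_of_mul hx ?_⟩
  rw [← hsmul, isHomogeneous_eval_smul hP, h, mul_zero]

end Homogeneous

section Shear

open MvPolynomial

variable {R : Type*} [CommRing R]

/-- The substitution `P(x, y) ↦ P(x + c y, y)` in polynomials in two variables, the coordinate
change used to move the points at infinity of a curve away from the vertical direction. -/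
def shear (c : R) : MvPolynomial (Fin 2) R ≃ₐ[R] MvPolynomial (Fin 2) R :=
  AlgEquiv.ofAlgHom (aeval ![X 0 + C c * X 1, X 1]) (aeval ![X 0 + C (-c) * X 1, X 1])
    (by ext1 i; fin_cases i <;> simp) (by ext1 i; fin_cases i <;> simp)

theorem shear_apply (c : R) (P : MvPolynomial (Fin 2) R) :
    shear c P = aeval ![X 0 + C c * X 1, X 1] P := rfl

theorem eval_shear (c : R) (x : Fin 2 → R) (P : MvPolynomial (Fin 2) R) :
    eval x (shear c P) = eval ![x 0 + c * x 1, x 1] P := by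
  rw [shear_apply, ← aeval_eq_eval, ← aeval_eq_eval]
  have : (aeval x).comp (aeval ![X 0 + C c * X 1, X 1]) = aeval ![x 0 + c * x 1, x 1] := by
    ext i
    fin_cases i <;> simp
  exact DFunLike.congr_fun this P

theorem isHomogeneous_shear_coordinate (c : R) (i : Fin 2) :
    (![X 0 + C c * X 1, X 1] i : MvPolynomial (Fin 2) R).IsHomogeneous 1 := by
  fin_cases i
  · exact (isHomogeneous_X _ _).add (isHomogeneous_C_mul_X _ _)
  · exact isHomogeneous_X _ _

theorem homogeneousComponent_shear (c : R) (n : ℕ) (P : MvPolynomial (Fin 2) R) :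
    homogeneousComponent n (shear c P) = shear c (homogeneousComponent n P) :=
  homogeneousComponent_aeval (isHomogeneous_shear_coordinate c) n P

theorem totalDegree_shear (c : R) (P : MvPolynomial (Fin 2) R) :
    (shear c P).totalDegree = P.totalDegree := by
  refine (totalDegree_aeval_le (isHomogeneous_shear_coordinate c) P).antisymm ?_
  conv_lhs => rw [← (shear c).symm_apply_apply P]
  exact totalDegree_aeval_le (isHomogeneous_shear_coordinate (-c)) _

theorem squarefree_shear {K : Type*} [Field K] {P : MvPolynomial (Fin 2) K} (c : K)
    (hP : Squarefree P) : Squarefree (shear c P) := fun d hd => by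
  rw [← isUnit_map_iff (shear c).symm]
  refine hP _ ?_
  rwa [← map_mul, ← map_dvd_iff (shear c), AlgEquiv.apply_symm_apply]

/-- A polynomial in two variables is regular in its second variable if its leading form does not
vanish on the vertical direction, that is, if the points at infinity of the curve it defines are
given by non-vertical directions. -/
def IsRegularInY (P : MvPolynomial (Fin 2) R) : Prop :=
  eval ![0, 1] (homogeneousComponent P.totalDegree P) ≠ 0

theorem exists_isRegularInY_shear {K : Type*} [Field K] [Infinite K]
    {P : MvPolynomial (Fin 2) K} (hP : P ≠ 0) : ∃ c, IsRegularInY (shear c P) := by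
  obtain ⟨c, hc⟩ := exists_eval_ne_zero_of_isHomogeneous
    (homogeneousComponent_isHomogeneous _ P) (homogeneousComponent_totalDegree_ne_zero hP)
  refine ⟨c, ?_⟩
  rw [IsRegularInY, totalDegree_shear, homogeneousComponent_shear, eval_shear]
  simpa using hc

end Shear

section VerticalLine

open MvPolynomial

variable {R : Type*} [CommRing R]

/-- The restriction of a polynomial in two variables to the vertical line over `u`, as a
polynomial in the second coordinate. -/
def restrictLine (P : MvPolynomial (Fin 2) R) (u : R) : Polynomial R :=
  aeval ![Polynomial.C u, Polynomial.X] P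

theorem eval_restrictLine (P : MvPolynomial (Fin 2) R) (u v : R) :
    (restrictLine P u).eval v = eval ![u, v] P := by
  have : ((Polynomial.evalRingHom v).comp
      (aeval ![Polynomial.C u, Polynomial.X] : _ →ₐ[R] Polynomial R).toRingHom) =
      eval ![u, v] := by
    ext i
    · simp
    · fin_cases i <;> simp
  exact DFunLike.congr_fun this P

theorem derivative_restrictLine (P : MvPolynomial (Fin 2) R) (u : R) :
    (restrictLine P u).derivative = restrictLine (pderiv 1 P) u := by
  simp only [restrictLine]
  induction P using MvPolynomial.induction_on with
  | C a => simp
  | add p q hp hq => simp [hp, hq]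
  | mul_X p i hp =>
    rw [map_mul, Polynomial.derivative_mul, hp, Derivation.leibniz]
    fin_cases i
    · simp [mul_comm]
    · simp only [Fin.mk_one, Fin.isValue, aeval_X, Matrix.cons_val_one, Matrix.cons_val_fin_one,
        Polynomial.derivative_X, mul_one, pderiv_X_self, smul_eq_mul, map_add, map_mul]
      ring

theorem restrictLine_eq_sum (P : MvPolynomial (Fin 2) R) (u : R) :
    restrictLine P u = ∑ m ∈ P.support,
      Polynomial.C (coeff m P * u ^ m 0) * Polynomial.X ^ m 1 := by
  rw [restrictLine, aeval_def, eval₂_eq']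
  simp [Fin.prod_univ_two, mul_assoc]

theorem natDegree_restrictLine_le (P : MvPolynomial (Fin 2) R) (u : R) :
    (restrictLine P u).natDegree ≤ P.totalDegree := by
  rw [restrictLine_eq_sum]
  refine Polynomial.natDegree_sum_le_of_forall_le _ _ fun m hm =>
    (Polynomial.natDegree_C_mul_X_pow_le _ _).trans ?_
  exact (monomial_le_degreeOf 1 hm).trans (degreeOf_le_totalDegree P 1)

theorem coeff_restrictLine_totalDegree (P : MvPolynomial (Fin 2) R) (u : R) :
    (restrictLine P u).coeff P.totalDegree =
      eval ![0, 1] (homogeneousComponent P.totalDegree P) := by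
  rw [restrictLine_eq_sum, Polynomial.finsetSum_coeff, homogeneousComponent_apply,
    Finset.sum_filter, map_sum]
  refine Finset.sum_congr rfl fun m hm => ?_
  have hdeg : m.degree = m 0 + m 1 := by simp [Finsupp.degree_eq_sum]
  have hle : m 0 + m 1 ≤ P.totalDegree := by
    rw [← hdeg]
    exact le_totalDegree hm
  rw [Polynomial.coeff_C_mul_X_pow, hdeg]
  split_ifs with h1 h2 h2
  · have h0 : m 0 = 0 := by omega
    simp [eval_monomial, Finsupp.prod_fintype, h0]
  · omega
  · have h0 : m 0 ≠ 0 := by omega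
    simp [eval_monomial, Finsupp.prod_fintype, h0]
  · rw [map_zero]

theorem IsRegularInY.natDegree_restrictLine {P : MvPolynomial (Fin 2) R} (hP : IsRegularInY P)
    (u : R) : (restrictLine P u).natDegree = P.totalDegree :=
  Polynomial.natDegree_eq_of_le_of_coeff_ne_zero (natDegree_restrictLine_le P u)
    (by rwa [coeff_restrictLine_totalDegree])

variable {K : Type*} [Field K]

theorem IsRegularInY.ne_zero {P : MvPolynomial (Fin 2) K} (hP : IsRegularInY P) : P ≠ 0 := by
  rintro rfl
  simp [IsRegularInY] at hP

theorem IsRegularInY.natDegree_restrictLine_of_dvd {P p : MvPolynomial (Fin 2) K}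
    (hP : IsRegularInY P) (hp : p ∣ P) (u : K) :
    (restrictLine p u).natDegree = p.totalDegree := by
  obtain ⟨q, rfl⟩ := hp
  have hdeg := hP.natDegree_restrictLine u
  have hmul : restrictLine (p * q) u = restrictLine p u * restrictLine q u := map_mul _ _ _
  have hp0 := left_ne_zero_of_mul hP.ne_zero
  have hq0 := right_ne_zero_of_mul hP.ne_zero
  rw [hmul, totalDegree_mul_of_isDomain hp0 hq0] at hdeg
  have := Polynomial.natDegree_mul_le (p := restrictLine p u) (q := restrictLine q u)
  have := natDegree_restrictLine_le p u
  have := natDegree_restrictLine_le q u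
  omega

theorem IsRegularInY.not_dvd_pderiv [CharZero K] {P p : MvPolynomial (Fin 2) K}
    (hP : IsRegularInY P) (hpP : p ∣ P) (hp : ¬ IsUnit p) : ¬ p ∣ pderiv 1 p := by
  intro h
  have hline : restrictLine p 0 ∣ (restrictLine p 0).derivative := by
    rw [derivative_restrictLine]
    exact map_dvd _ h
  have hdeg : p.totalDegree = 0 := by
    rw [← hP.natDegree_restrictLine_of_dvd hpP 0]
    exact Polynomial.derivative_eq_zero.1 (Polynomial.dvd_derivative_iff.1 hline)
  rw [totalDegree_eq_zero_iff_eq_C] at hdeg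
  have hcoeff : coeff 0 p ≠ 0 := fun h0 =>
    ne_zero_of_dvd_ne_zero hP.ne_zero hpP (by rw [hdeg, h0, C_0])
  exact hp (hdeg ▸ (isUnit_iff_ne_zero.2 hcoeff).map C)

theorem IsRegularInY.isRelPrime_pderiv [CharZero K] {P : MvPolynomial (Fin 2) K}
    (hP : IsRegularInY P) (hsq : Squarefree P) : IsRelPrime P (pderiv 1 P) := by
  refine WfDvdMonoid.isRelPrime_of_no_irreducible_factors (fun h => hP.ne_zero h.1) ?_
  rintro p hp ⟨q, rfl⟩ hpd
  rw [Derivation.leibniz, smul_eq_mul, smul_eq_mul,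
    dvd_add_right (dvd_mul_right _ _)] at hpd
  rcases hp.prime.dvd_or_dvd hpd with hpq | hpp
  · exact hp.not_isUnit (hsq p (mul_dvd_mul_left p hpq))
  · exact hP.not_dvd_pderiv (dvd_mul_right p q) hp.not_isUnit hpp

theorem IsRegularInY.finite_setOf_eval_eq_zero [CharZero K] {P : MvPolynomial (Fin 2) K}
    (hP : IsRegularInY P) (hsq : Squarefree P) :
    {x | eval x P = 0 ∧ eval x (pderiv 1 P) = 0}.Finite :=
  finite_setOf_eval_eq_zero_of_isRelPrime (hP.isRelPrime_pderiv hsq)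

end VerticalLine

section Growth

open MvPolynomial Asymptotics

variable {𝕜 σ : Type*} [RCLike 𝕜] [Fintype σ]

theorem isLittleO_eval_cobounded {P : MvPolynomial σ 𝕜} {d : ℕ}
    (hP : ∀ m ∈ P.support, m.degree < d) :
    (fun x => eval x P) =o[cobounded (σ → 𝕜)] fun x => ‖x‖ ^ d := by
  simp only [eval_eq']
  refine IsLittleO.fun_sum fun m hm => ?_
  suffices h : (fun x : σ → 𝕜 => ∏ i, x i ^ m i) =o[cobounded (σ → 𝕜)] fun x => ‖x‖ ^ d from
    h.const_mul_left _
  have hpow : (fun x : σ → 𝕜 => ‖x‖ ^ m.degree) =o[cobounded (σ → 𝕜)] fun x => ‖x‖ ^ d :=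
    (isLittleO_pow_pow_atTop_of_lt (hP m hm)).comp_tendsto tendsto_norm_cobounded_atTop
  refine IsBigO.trans_isLittleO (g := fun x => ‖x‖ ^ m.degree)
    (IsBigO.of_bound' (.of_forall fun x => ?_)) hpow
  rw [norm_prod, Finsupp.degree_eq_sum, norm_pow, norm_norm, ← Finset.prod_pow_eq_pow_sum]
  gcongr with i
  rw [norm_pow]
  gcongr
  exact norm_le_pi_norm x i

theorem exists_pos_mul_norm_pow_le_norm_eval {P : MvPolynomial σ 𝕜} {d : ℕ}
    (hP : P.IsHomogeneous d) {A : Set (σ → 𝕜)} (hA : IsClosed A)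
    (hcone : ∀ x ∈ A, ∀ c : 𝕜, c • x ∈ A) (hne : ∀ x ∈ A, x ≠ 0 → eval x P ≠ 0) :
    ∃ m > 0, ∀ x ∈ A, x ≠ 0 → m * ‖x‖ ^ d ≤ ‖eval x P‖ := by
  have hcompact : IsCompact (A ∩ sphere 0 1) := (isCompact_sphere 0 1).inter_left hA
  obtain ⟨m, hm, hle⟩ : ∃ m > 0, ∀ x ∈ A ∩ sphere 0 1, m ≤ ‖eval x P‖ :=
    hcompact.exists_forall_le' (continuous_eval P).norm.continuousOn fun x hx =>
      norm_pos_iff.2 (hne x hx.1 (ne_zero_of_mem_unit_sphere ⟨x, hx.2⟩))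
  refine ⟨m, hm, fun x hxA hx => ?_⟩
  set r : 𝕜 := (‖x‖ : 𝕜)
  have hr : r ≠ 0 := by simpa [r] using hx
  have hnorm : ‖r‖ = ‖x‖ := by simp [r]
  have hunit : r⁻¹ • x ∈ A ∩ sphere 0 1 := by
    refine ⟨hcone x hxA _, ?_⟩
    rw [mem_sphere_zero_iff_norm, norm_smul, norm_inv, hnorm,
      inv_mul_cancel₀ (norm_ne_zero_iff.2 hx)]
  calc m * ‖x‖ ^ d ≤ ‖eval (r⁻¹ • x) P‖ * ‖x‖ ^ d := by gcongr; exact hle _ hunit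
    _ = ‖eval (r • r⁻¹ • x) P‖ := by
      rw [isHomogeneous_eval_smul hP r, norm_mul, norm_pow, hnorm, mul_comm]
    _ = ‖eval x P‖ := by rw [smul_inv_smul₀ hr]

theorem exists_pos_eventually_mul_norm_pow_le_norm_eval (P : MvPolynomial σ 𝕜) {A : Set (σ → 𝕜)}
    (hA : IsClosed A) (hcone : ∀ x ∈ A, ∀ c : 𝕜, c • x ∈ A)
    (hne : ∀ x ∈ A, x ≠ 0 → eval x (homogeneousComponent P.totalDegree P) ≠ 0) :
    ∃ m > 0, ∀ᶠ x in cobounded (σ → 𝕜), x ∈ A → m * ‖x‖ ^ P.totalDegree ≤ ‖eval x P‖ := by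
  obtain ⟨m, hm, hle⟩ := exists_pos_mul_norm_pow_le_norm_eval
    (homogeneousComponent_isHomogeneous P.totalDegree P) hA hcone hne
  have hlow : ∀ k ∈ (P - homogeneousComponent P.totalDegree P).support,
      k.degree < P.totalDegree := by
    intro k hk
    rw [mem_support_iff, coeff_sub, coeff_homogeneousComponent] at hk
    split_ifs at hk with hdeg
    · simp at hk
    · refine lt_of_le_of_ne ?_ hdeg
      exact le_totalDegree (mem_support_iff.2 (by simpa using hk))
  refine ⟨m / 2, half_pos hm, ?_⟩
  filter_upwards [(isLittleO_eval_cobounded hlow).def (half_pos hm),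
    eventually_ne_cobounded 0] with x hx hx0 hxA
  rw [map_sub, norm_pow, norm_norm] at hx
  have := norm_sub_norm_le (eval x (homogeneousComponent P.totalDegree P)) (eval x P)
  rw [norm_sub_rev] at this
  linarith [hle x hxA hx0]

end Growth

section Slopes

open MvPolynomial

variable {K : Type*} [Field K]

open scoped Classical in
/-- The slopes `t` of the non-vertical lines `y = t * x` on which the leading form of `P`
vanishes: the directions in which the zero set of `P` can go to infinity. -/
def slopesAtInfinity (P : MvPolynomial (Fin 2) K) : Finset K :=
  (restrictLine (homogeneousComponent P.totalDegree P) 1).roots.toFinset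

theorem restrictLine_homogeneousComponent_ne_zero {P : MvPolynomial (Fin 2) K}
    (hP : IsRegularInY P) (u : K) :
    restrictLine (homogeneousComponent P.totalDegree P) u ≠ 0 := by
  have hhom := homogeneousComponent_isHomogeneous P.totalDegree P
  have hne : homogeneousComponent P.totalDegree P ≠ 0 := fun h => hP (by rw [h, map_zero])
  intro h
  have hcoeff := coeff_restrictLine_totalDegree (homogeneousComponent P.totalDegree P) u
  rw [h, Polynomial.coeff_zero, hhom.totalDegree hne, homogeneousComponent_eq_self hhom]
    at hcoeff
  exact hP hcoeff.symm

theorem IsRegularInY.exists_mem_slopesAtInfinity {P : MvPolynomial (Fin 2) K}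
    (hP : IsRegularInY P) {x : Fin 2 → K} (hx : x ≠ 0)
    (heval : eval x (homogeneousComponent P.totalDegree P) = 0) :
    ∃ t ∈ slopesAtInfinity P, x 1 = t * x 0 := by
  have hhom := homogeneousComponent_isHomogeneous P.totalDegree P
  have hx0 : x 0 ≠ 0 := by
    intro h0
    have hvert : x = x 1 • ![0, 1] := by ext i; fin_cases i <;> simp [h0]
    rw [hvert, isHomogeneous_eval_smul hhom] at heval
    have hx1 : x 1 = 0 := eq_zero_of_pow_eq_zero ((mul_eq_zero.1 heval).resolve_right hP)
    exact hx (by rw [hvert, hx1, zero_smul])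
  refine ⟨x 1 / x 0, ?_, (div_mul_cancel₀ _ hx0).symm⟩
  have hscale : ![1, x 1 / x 0] = (x 0)⁻¹ • x := by
    ext i; fin_cases i <;> simp [hx0, div_eq_inv_mul]
  classical
  refine Multiset.mem_toFinset.2 ?_
  rw [Polynomial.mem_roots (restrictLine_homogeneousComponent_ne_zero hP 1), Polynomial.IsRoot,
    eval_restrictLine, hscale, isHomogeneous_eval_smul hhom, heval, mul_zero]

theorem IsRegularInY.exists_pos_eventually_mul_norm_pow_le {𝕜 : Type*} [RCLike 𝕜]
    {P : MvPolynomial (Fin 2) 𝕜} (hP : IsRegularInY P) {η : ℝ} (hη : 0 < η) :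
    ∃ m > 0, ∀ᶠ x in cobounded (Fin 2 → 𝕜),
      (∀ t ∈ slopesAtInfinity P, η * ‖x 0‖ ≤ ‖x 1 - t * x 0‖) →
        m * ‖x‖ ^ P.totalDegree ≤ ‖eval x P‖ := by
  refine exists_pos_eventually_mul_norm_pow_le_norm_eval P
    (A := {x | ∀ t ∈ slopesAtInfinity P, η * ‖x 0‖ ≤ ‖x 1 - t * x 0‖}) ?_ ?_ ?_
  · simp only [ofPred_forall]
    exact isClosed_biInter fun t _ => isClosed_le (by fun_prop) (by fun_prop)
  · intro x hx c t ht
    have : (c • x) 1 - t * (c • x) 0 = c * (x 1 - t * x 0) := by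
      simp only [Pi.smul_apply, smul_eq_mul]; ring
    rw [this, Pi.smul_apply, smul_eq_mul, norm_mul, norm_mul, mul_left_comm]
    gcongr
    exact hx t ht
  · intro x hx hx0 heval
    obtain ⟨t, ht, hxt⟩ := hP.exists_mem_slopesAtInfinity hx0 heval
    have hle := hx t ht
    rw [sub_eq_zero.2 hxt, norm_zero] at hle
    have hfst : x 0 = 0 := norm_le_zero_iff.1 (nonpos_of_mul_nonpos_right hle hη)
    refine hx0 (funext fun i => ?_)
    fin_cases i
    · exact hfst
    · simp [hxt, hfst]

end Slopes

section FibreMap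

open MvPolynomial

/-- The zero set in `ℂ × ℂ` of a polynomial in two variables. -/
def zeroSet (P : MvPolynomial (Fin 2) ℂ) : Set (ℂ × ℂ) := {z | eval ![z.1, z.2] P = 0}

/-- The map `(x, y) ↦ (x, P (x, y))`. Its fibres over the points `(u, 0)` are the fibres of the
zero set of `P` over `u`. -/
def fiberMap (P : MvPolynomial (Fin 2) ℂ) (z : ℂ × ℂ) : ℂ × ℂ := (z.1, eval ![z.1, z.2] P)

theorem norm_vecCons_fst_snd (z : ℂ × ℂ) : ‖![z.1, z.2]‖ = ‖z‖ := by
  refine le_antisymm ((pi_norm_le_iff_of_nonneg (norm_nonneg z)).2 fun i => ?_)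
    (max_le (norm_le_pi_norm ![z.1, z.2] 0) (norm_le_pi_norm ![z.1, z.2] 1))
  fin_cases i
  · exact norm_fst_le z
  · exact norm_snd_le z

theorem tendsto_vecCons_cobounded :
    Tendsto (fun z : ℂ × ℂ => ![z.1, z.2]) (cobounded (ℂ × ℂ)) (cobounded (Fin 2 → ℂ)) := by
  rw [← tendsto_norm_atTop_iff_cobounded]
  simpa only [norm_vecCons_fst_snd] using tendsto_norm_cobounded_atTop

variable {P : MvPolynomial (Fin 2) ℂ}

theorem IsRegularInY.eventually_exists_norm_sub_le (hP : IsRegularInY P) {η : ℝ} (hη : 0 < η) :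
    ∀ᶠ z in atInfinity (zeroSet P),
      ∃ t ∈ slopesAtInfinity P, ‖z.2 - t * z.1‖ ≤ η * ‖z.1‖ := by
  obtain ⟨m, hm, hle⟩ := hP.exists_pos_eventually_mul_norm_pow_le hη
  rw [atInfinity, eventually_inf_principal]
  filter_upwards [tendsto_vecCons_cobounded.eventually hle, eventually_ne_cobounded 0]
    with z hz hz0 hzero
  by_contra! hfar
  have hlower := hz fun t ht => (hfar t ht).le
  rw [show eval ![z.1, z.2] P = 0 from hzero, norm_zero, norm_vecCons_fst_snd] at hlower
  have := norm_pos_iff.2 hz0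
  exact absurd hlower (by push Not; positivity)

theorem IsRegularInY.exists_pos_eventually_mul_norm_le_norm_fiberMap (hP : IsRegularInY P)
    (hd : P.totalDegree ≠ 0) :
    ∃ c > 0, ∀ᶠ z in cobounded (ℂ × ℂ), c * ‖z‖ ≤ ‖fiberMap P z‖ := by
  obtain ⟨m, hm, hle⟩ := hP.exists_pos_eventually_mul_norm_pow_le one_pos
  obtain ⟨L, hL, hLt⟩ := exists_norm_le_of_mem (slopesAtInfinity P)
  refine ⟨min (1 + L)⁻¹ m, by positivity, ?_⟩
  filter_upwards [tendsto_vecCons_cobounded.eventually hle,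
    tendsto_norm_cobounded_atTop.eventually_ge_atTop 1] with z hz hz1
  rw [norm_vecCons_fst_snd] at hz
  by_cases hfar : ∀ t ∈ slopesAtInfinity P, 1 * ‖z.1‖ ≤ ‖z.2 - t * z.1‖
  · calc min (1 + L)⁻¹ m * ‖z‖ ≤ m * ‖z‖ ^ P.totalDegree := by
          gcongr
          · exact min_le_right _ _
          · exact le_self_pow₀ hz1 hd
      _ ≤ ‖eval ![z.1, z.2] P‖ := hz hfar
      _ ≤ ‖fiberMap P z‖ := norm_snd_le (fiberMap P z)
  · push Not at hfar
    obtain ⟨t, ht, hclose⟩ := hfar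
    have hsnd : ‖z.2‖ ≤ (1 + L) * ‖z.1‖ := by
      have h1 := norm_le_norm_add_norm_sub' z.2 (t * z.1)
      rw [norm_mul] at h1
      nlinarith [hLt t ht, norm_nonneg z.1]
    have hfst : ‖z.1‖ ≤ (1 + L) * ‖z.1‖ :=
      le_mul_of_one_le_left (norm_nonneg _) (by linarith)
    calc min (1 + L)⁻¹ m * ‖z‖ ≤ (1 + L)⁻¹ * ((1 + L) * ‖z.1‖) := by
          gcongr
          · exact min_le_left _ _
          · exact max_le hfst hsnd
      _ = ‖z.1‖ := inv_mul_cancel_left₀ (by positivity) _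
      _ ≤ ‖fiberMap P z‖ := norm_fst_le (fiberMap P z)

theorem continuous_fiberMap (P : MvPolynomial (Fin 2) ℂ) : Continuous (fiberMap P) :=
  continuous_fst.prodMk ((continuous_eval P).comp (by fun_prop))

theorem IsRegularInY.isClosedMap_fiberMap (hP : IsRegularInY P) (hd : P.totalDegree ≠ 0) :
    IsClosedMap (fiberMap P) := by
  obtain ⟨c, hc, hle⟩ := hP.exists_pos_eventually_mul_norm_le_norm_fiberMap hd
  have htendsto : Tendsto (fiberMap P) (cobounded _) (cobounded _) :=
    tendsto_norm_atTop_iff_cobounded.1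
      (tendsto_atTop_mono' _ hle (tendsto_norm_cobounded_atTop.const_mul_atTop hc))
  rw [Metric.cobounded_eq_cocompact] at htendsto
  exact (isProperMap_iff_tendsto_cocompact.2 ⟨continuous_fiberMap P, htendsto⟩).isClosedMap

end FibreMap

section Covering

variable {𝕜 E F G : Type*} [NontriviallyNormedField 𝕜] [NormedAddCommGroup E] [NormedSpace 𝕜 E]
  [CompleteSpace E] [NormedAddCommGroup F] [NormedSpace 𝕜 F] [CompleteSpace F]
  [NormedAddCommGroup G] [NormedSpace 𝕜 G]

theorem exists_openPartialHomeomorph_of_hasStrictFDerivAt {f : E × F → G} {f' : E × F →L[𝕜] G}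
    {z : E × F} (hf : HasStrictFDerivAt f f' z) (e : F ≃L[𝕜] G)
    (he : (e : F →L[𝕜] G) = f' ∘L .inr 𝕜 E F) :
    ∃ φ : OpenPartialHomeomorph (E × F) (E × G), z ∈ φ.source ∧ (fun w => (w.1, f w)) = φ := by
  have hlin : ((ContinuousLinearEquiv.refl 𝕜 E).skewProd e (f' ∘L .inl 𝕜 E F) :
      E × F →L[𝕜] E × G) = (ContinuousLinearMap.fst 𝕜 E F).prod f' := by
    ext w
    · simp
    · simp
    · simp
    · simpa [Prod.mk_zero_zero] using DFunLike.congr_fun he w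
  have hderiv : HasStrictFDerivAt (fun w : E × F => (w.1, f w))
      ((ContinuousLinearEquiv.refl 𝕜 E).skewProd e (f' ∘L .inl 𝕜 E F) : E × F →L[𝕜] E × G) z :=
    hlin ▸ hasStrictFDerivAt_fst.prodMk hf
  exact ⟨hderiv.toOpenPartialHomeomorph _, hderiv.mem_toOpenPartialHomeomorph_source, rfl⟩

variable {X : Type*} [TopologicalSpace X]

theorem bijOn_connectedComponentIn_of_isCoveringMapOn {Y : Type*} [TopologicalSpace Y]
    {p : Y → X} {B : Set X} (hp : IsCoveringMapOn p B) [SimplyConnectedSpace B]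
    [LocallyPathConnectedSpace B] {y : Y} (hy : p y ∈ B) :
    BijOn p (connectedComponentIn (p ⁻¹' B) y) B := by
  have hcov := hp.isCoveringMap_restrictPreimage
  obtain ⟨s, ⟨hsy, hs⟩, -⟩ :=
    hcov.existsUnique_continuousMap_lifts (.id B) ⟨p y, hy⟩ ⟨y, hy⟩ rfl
  have hps : ∀ b, p (s b) = b := fun b => congrArg Subtype.val (congrFun hs b)
  have hsp : EqOn id (s ∘ B.restrictPreimage p) (connectedComponent ⟨y, hy⟩) :=
    hcov.eqOn_of_comp_eqOn isPreconnected_connectedComponent continuousOn_id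
      (s.continuous.comp hcov.continuous).continuousOn
      (fun w _ => (congrFun hs (B.restrictPreimage p w)).symm) mem_connectedComponent hsy.symm
  have hmem : ∀ b, s b ∈ connectedComponent (⟨y, hy⟩ : p ⁻¹' B) := fun b =>
    (isPreconnected_range s.continuous).subset_connectedComponent ⟨_, hsy⟩ ⟨b, rfl⟩
  rw [connectedComponentIn_eq_image (show y ∈ p ⁻¹' B from hy)]
  refine ⟨?_, ?_, fun b hb => ⟨s ⟨b, hb⟩, ⟨_, hmem _, rfl⟩, hps _⟩⟩
  · rintro _ ⟨w, -, rfl⟩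
    exact w.2
  · rintro _ ⟨w, hw, rfl⟩ _ ⟨w', hw', rfl⟩ heq
    have hbase : B.restrictPreimage p w = B.restrictPreimage p w' := Subtype.ext heq
    have : w = w' := (hsp hw).trans ((congrArg s hbase).trans (hsp hw').symm)
    rw [this]

end Covering

section SheetedZeroSet

open MvPolynomial

variable {P : MvPolynomial (Fin 2) ℂ}

theorem exists_hasStrictFDerivAt_eval (P : MvPolynomial (Fin 2) ℂ) (z : ℂ × ℂ) :
    ∃ f' : ℂ × ℂ →L[ℂ] ℂ, HasStrictFDerivAt (fun w : ℂ × ℂ => eval ![w.1, w.2] P) f' z ∧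
      f' (0, 1) = eval ![z.1, z.2] (pderiv 1 P) := by
  have hanalytic : AnalyticAt ℂ (fun w : ℂ × ℂ => aeval ![w.1, w.2] P) z := by
    refine AnalyticAt.aeval_mvPolynomial (fun i => ?_) P
    fin_cases i
    · exact analyticAt_fst
    · exact analyticAt_snd
  have hf := hanalytic.hasStrictFDerivAt
  refine ⟨_, hf, ?_⟩
  have hline : HasDerivAt (fun v : ℂ => (z.1, v)) ((0 : ℂ), (1 : ℂ)) z.2 :=
    (hasDerivAt_const _ _).prodMk (hasDerivAt_id _)
  have hcomp := hf.hasFDerivAt.comp_hasDerivAt z.2 hline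
  have hpoly := (restrictLine P z.1).hasDerivAt z.2
  simp only [eval_restrictLine] at hpoly
  rw [hcomp.unique hpoly, derivative_restrictLine, eval_restrictLine]

theorem isLocalHomeomorphOn_fiberMap (P : MvPolynomial (Fin 2) ℂ) :
    IsLocalHomeomorphOn (fiberMap P) {z | eval ![z.1, z.2] (pderiv 1 P) ≠ 0} := by
  intro z hz
  obtain ⟨f', hf, hf'⟩ := exists_hasStrictFDerivAt_eval P z
  refine exists_openPartialHomeomorph_of_hasStrictFDerivAt hf
    (ContinuousLinearEquiv.unitsEquivAut ℂ (Units.mk0 _ hz)) ?_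
  ext
  simp [hf']

theorem IsRegularInY.encard_setOf_eval_eq_zero (hP : IsRegularInY P) {u : ℂ}
    (hu : ∀ v, eval ![u, v] P = 0 → eval ![u, v] (pderiv 1 P) ≠ 0) :
    {v | eval ![u, v] P = 0}.encard = P.totalDegree := by
  classical
  have hne : restrictLine P u ≠ 0 := fun h => hP (by
    rw [← coeff_restrictLine_totalDegree P u, h, Polynomial.coeff_zero])
  have hroots : {v | eval ![u, v] P = 0} = (restrictLine P u).roots.toFinset := by
    ext v
    simp [Polynomial.mem_roots hne, Polynomial.IsRoot, eval_restrictLine]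
  have hnodup : (restrictLine P u).roots.Nodup := by
    refine Multiset.nodup_iff_count_le_one.2 fun v => ?_
    rw [Polynomial.count_roots]
    by_contra! hmult
    obtain ⟨hroot, hroot'⟩ := (Polynomial.one_lt_rootMultiplicity_iff_isRoot hne).1 hmult
    rw [derivative_restrictLine] at hroot'
    rw [Polynomial.IsRoot, eval_restrictLine] at hroot hroot'
    exact hu v hroot hroot'
  rw [hroots, encard_coe_eq_coe_finsetCard, Multiset.toFinset_card_of_nodup hnodup,
    Polynomial.splits_iff_card_roots.1 (IsAlgClosed.splits _), hP.natDegree_restrictLine]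

theorem IsRegularInY.totalDegree_ne_zero_of_mem_zeroSet (hP : IsRegularInY P) {z : ℂ × ℂ}
    (hz : z ∈ zeroSet P) : P.totalDegree ≠ 0 := by
  intro hdeg
  have hC := totalDegree_eq_zero_iff_eq_C.1 hdeg
  have hcoeff : coeff 0 P = 0 := by
    rw [zeroSet, mem_ofPred_eq, hC, eval_C] at hz
    exact hz
  exact hP.ne_zero (by rw [hC, hcoeff, C_0])

theorem IsRegularInY.eventually_forall_eval_pderiv_ne_zero (hP : IsRegularInY P)
    (hsq : Squarefree P) : ∀ᶠ u in cobounded ℂ,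
      ∀ v, eval ![u, v] P = 0 → eval ![u, v] (pderiv 1 P) ≠ 0 := by
  have hfin := (hP.finite_setOf_eval_eq_zero hsq).image fun x => x 0
  filter_upwards [isBounded_def.1 hfin.isBounded] with u hu v hv hv'
  exact hu ⟨![u, v], ⟨hv, hv'⟩, rfl⟩

theorem IsRegularInY.isCoveringMapOn_fiberMap (hP : IsRegularInY P) (hd : P.totalDegree ≠ 0)
    {U : Set ℂ} (hU : ∀ u ∈ U, ∀ v, eval ![u, v] P = 0 → eval ![u, v] (pderiv 1 P) ≠ 0) :
    IsCoveringMapOn (fiberMap P) (U ×ˢ {0}) := by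
  refine (hP.isClosedMap_fiberMap hd).isCoveringMapOn_of_isLocalHomeomorphOn ?_
    ((isLocalHomeomorphOn_fiberMap P).mono fun z hz => hU z.1 hz.1 z.2 hz.2)
  rintro ⟨u, w⟩ ⟨hu, rfl : w = 0⟩
  have hfin : {v | eval ![u, v] P = 0}.Finite :=
    finite_of_encard_eq_coe (hP.encard_setOf_eval_eq_zero (hU u hu))
  refine (hfin.image (Prod.mk u)).subset ?_
  rintro ⟨u', v⟩ hv
  obtain ⟨rfl, hzero⟩ := Prod.mk.inj (show (u', eval ![u', v] P) = (u, 0) from hv)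
  exact ⟨v, hzero, rfl⟩

theorem IsRegularInY.bijOn_fst_connectedComponentIn (hP : IsRegularInY P) {U : Set ℂ}
    (hUconv : Convex ℝ U)
    (hU : ∀ u ∈ U, ∀ v, eval ![u, v] P = 0 → eval ![u, v] (pderiv 1 P) ≠ 0) {z : ℂ × ℂ}
    (hz : z ∈ zeroSet P) (hzU : z.1 ∈ U) :
    BijOn Prod.fst (connectedComponentIn (zeroSet P ∩ Prod.fst ⁻¹' U) z) U := by
  have hconv : Convex ℝ (U ×ˢ ({0} : Set ℂ)) := hUconv.prod (convex_singleton 0)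
  have := hconv.locallyPathConnectedSpace
  have := hconv.contractibleSpace ⟨(z.1, 0), hzU, rfl⟩
  have hpre : fiberMap P ⁻¹' (U ×ˢ {0}) = zeroSet P ∩ Prod.fst ⁻¹' U := by
    ext w
    exact and_comm
  have hcov := hP.isCoveringMapOn_fiberMap (hP.totalDegree_ne_zero_of_mem_zeroSet hz) hU
  have hbij := bijOn_connectedComponentIn_of_isCoveringMapOn hcov (y := z) ⟨hzU, hz⟩
  have hfst : BijOn Prod.fst (U ×ˢ ({0} : Set ℂ)) U :=
    ⟨fun w hw => hw.1, fun w hw w' hw' h => Prod.ext h (hw.2.trans hw'.2.symm),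
      fun u hu => ⟨(u, 0), ⟨hu, rfl⟩, rfl⟩⟩
  rw [hpre] at hbij
  have hcomp := hfst.comp hbij
  exact hcomp

theorem IsRegularInY.isSheetedAtInfinity_zeroSet (hP : IsRegularInY P) (hsq : Squarefree P) :
    IsSheetedAtInfinity (zeroSet P) P.totalDegree where
  encard_fiber := by
    filter_upwards [hP.eventually_forall_eval_pderiv_ne_zero hsq] with u hu
    have hfiber : {z ∈ zeroSet P | z.1 = u} = Prod.mk u '' {v | eval ![u, v] P = 0} := by
      ext ⟨u', v⟩
      simp only [zeroSet, mem_ofPred_eq, mem_image, Prod.mk.injEq, exists_eq_right_right]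
      grind
    rw [hfiber, (Prod.mk_right_injective u).injOn.encard_image, hP.encard_setOf_eval_eq_zero hu]
  bijOn := by
    obtain ⟨R, -, hR⟩ := atTop_basis_Ioi.cobounded_of_norm.eventually_iff.1
      (hP.eventually_forall_eval_pderiv_ne_zero hsq)
    have hfar : ∀ᶠ a in cobounded ℂ, 2 * R < ‖a‖ :=
      atTop_basis_Ioi.cobounded_of_norm.mem_of_mem trivial
    filter_upwards [hfar] with a ha r hr z hz hza
    refine hP.bijOn_fst_connectedComponentIn (convex_ball a r) (fun u hu => hR ?_) hz hza
    rw [mem_ball_iff_norm'] at hu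
    have : R < ‖u‖ := by linarith [norm_le_norm_add_norm_sub' a u]
    exact this

end SheetedZeroSet

section PlaneCurve

/-- The linear change of coordinates `(x, y) ↦ (x - c * y, y)`, which carries the zero set of a
polynomial `P` to that of `shear c P`. -/
def shearEquiv (c : ℂ) : EuclideanSpace ℂ (Fin 2) ≃L[ℂ] ℂ × ℂ :=
  LinearEquiv.toContinuousLinearEquiv
    { toFun := fun x => (x 0 - c * x 1, x 1)
      invFun := fun z => !₂[z.1 + c * z.2, z.2]
      map_add' := fun x y => by ext <;> simp; ring
      map_smul' := fun a x => by ext <;> simp; ring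
      left_inv := fun x => by ext i; fin_cases i <;> simp
      right_inv := fun z => by simp }

theorem image_shearEquiv_eq_zeroSet (c : ℂ) (P : MvPolynomial (Fin 2) ℂ) :
    shearEquiv c '' {x | MvPolynomial.eval (fun i => x i) P = 0} = zeroSet (shear c P) := by
  rw [ContinuousLinearEquiv.image_eq_preimage_symm]
  ext z
  have hsymm : (fun i => (shearEquiv c).symm z i) = ![z.1 + c * z.2, z.2] := by
    ext i
    fin_cases i <;> rfl
  simp only [zeroSet, mem_preimage, mem_ofPred_eq, hsymm, eval_shear, Matrix.cons_val_zero,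
    Matrix.cons_val_one]

theorem IsAlgebraicCurve.exists_hasConicalEnds {X : Set (EuclideanSpace ℂ (Fin 2))}
    (hX : IsAlgebraicCurve X) :
    ∃ (e : EuclideanSpace ℂ (Fin 2) ≃L[ℂ] ℂ × ℂ) (label : ℂ × ℂ → ℂ) (T : Finset ℂ) (m : ℂ → ℕ),
      HasConicalEnds (e '' X) label T m ∧ ∑ t ∈ T, m t = curveDegree X := by
  obtain ⟨P, hsq, rfl, hdeg⟩ := hX.exists_squarefree
  obtain ⟨c, hreg⟩ := exists_isRegularInY_shear hsq.ne_zero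
  obtain ⟨label, hlabel⟩ := exists_hasAsymptoticSlopes
    fun η hη => hreg.eventually_exists_norm_sub_le hη
  obtain ⟨T, m, hends, hsum⟩ :=
    (hreg.isSheetedAtInfinity_zeroSet (squarefree_shear c hsq)).exists_hasConicalEnds hlabel
  refine ⟨shearEquiv c, label, T, m, ?_, ?_⟩
  · rwa [image_shearEquiv_eq_zeroSet]
  · rw [hsum, totalDegree_shear, hdeg]

end PlaneCurve

/-- algebraic plane curves which are bi-Lipschitz equivalent at infinity have
the same degree. -/
theorem stmt_9 (X Y : Set (EuclideanSpace ℂ (Fin 2)))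
    (hX : IsAlgebraicCurve X) (hY : IsAlgebraicCurve Y)
    (h : BiLipschitzEquivAtInfinity X Y) :
    curveDegree X = curveDegree Y := by
  obtain ⟨e, label, T, m, hendsX, hsumX⟩ := hX.exists_hasConicalEnds
  obtain ⟨e', label', T', m', hendsY, hsumY⟩ := hY.exists_hasConicalEnds
  obtain ⟨f, g, M, hfg⟩ := h.exists_isBiLipschitzAtInfinity_image e e'
  rw [← hsumX, ← hsumY, hfg.sum_multiplicity_eq hendsX hendsY]

end
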